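/- arXiv:1207.5811 — 3 statements merged into one kernel-verified Lean document; each statement's English description precedes it below -/
import Mathlib

section
/- Let n be a positive integer and s, t primes with n − φ(n) < s < t and s ≡ ±t (mod n). Then Φ_{ns} and Φ_{nt} have the same height, i.e., A(ns) = A(nt). -/
/-- The height of the `m`-th cyclotomic polynomial: the maximum absolute value of
its coefficients. -/
noncomputable def cyclotomicHeight (m : ℕ) : ℕ :=
  (Polynomial.cyclotomic m ℤ).support.sup
    fun k => ((Polynomial.cyclotomic m ℤ).coeff k).natAbs

/-!
Let `Ψ = (X ^ n - 1) / Φ_n`, of degree `n - φ(n) < s`. Then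
`Φ_{ns}(x) (x ^ n - 1) = Φ_n(x ^ s) Ψ(x)`, so on the one hand the negated coefficients of `Φ_{ns}`
are exactly the partial sums of the coefficients of `Φ_n(x ^ s) Ψ(x)` along residue classes
modulo `n`. On the other hand `deg Ψ < s`, so the blocks `x ^ (s i) Ψ(x)` of `Φ_n(x ^ s) Ψ(x)` do
not overlap and, since also `deg Ψ < n`, each contributes at most one term to a given residue class.
Hence these partial sums are `∑_{i < q} a_i c(r - s i)`, where the `a_i` are the coefficients of
`Φ_n` and `c` is the `n`-periodic extension of the coefficients of `Ψ`: they depend on `s` only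
modulo `n`. The complete sums vanish, so for `n > 1` the symmetry `a_i = a_{φ(n) - i}` turns an
initial sum for `-s` into minus an initial sum for `s`.
-/

open Polynomial
open scoped Pointwise

section ResidueSum

variable {n : ℕ}

/-- The partial sum of the terms `f k`, `k < M`, whose index lies in the residue class `r`
modulo `n`. -/
def residueSum {R : Type*} [AddCommMonoid R] (f : ℕ → R) (r : ZMod n) (M : ℕ) : R :=
  ∑ k ∈ Finset.range M with ((k : ℕ) : ZMod n) = r, f k

section AddCommMonoid

variable {R : Type*} [AddCommMonoid R]

theorem residueSum_zero (f : ℕ → R) (r : ZMod n) : residueSum f r 0 = 0 := by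
  simp [residueSum]

theorem residueSum_add (f : ℕ → R) (r : ZMod n) (M J : ℕ) :
    residueSum f r (M + J) =
      residueSum f r M + residueSum (fun j => f (M + j)) (r - (M : ZMod n)) J := by
  simp only [residueSum, Finset.sum_filter, Finset.sum_range_add, Nat.cast_add, eq_sub_iff_add_eq']

theorem residueSum_succ_of_ne (f : ℕ → R) {r : ZMod n} {M : ℕ} (h : (M : ZMod n) ≠ r) :
    residueSum f r (M + 1) = residueSum f r M := by
  simp [residueSum, Finset.range_add_one, Finset.filter_insert, h]

theorem residueSum_of_support_lt [NeZero n] {f : ℕ → R} (hf : ∀ k, n ≤ k → f k = 0)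
    (r : ZMod n) (M : ℕ) :
    residueSum f r M = if r.val < M then f r.val else 0 := by
  have only_val (k : ℕ) (hk : k ≠ r.val) : (if (k : ZMod n) = r then f k else 0) = 0 := by
    refine ite_eq_right_iff.2 fun hkr => hf k (not_lt.1 fun hkn => hk ?_)
    rw [← hkr, ZMod.val_cast_of_lt hkn]
  rw [residueSum, Finset.sum_filter]
  split_ifs with h
  · rw [Finset.sum_eq_single_of_mem _ (Finset.mem_range.2 h) fun k _ hk => only_val k hk,
      if_pos (ZMod.natCast_zmod_val r)]
  · exact Finset.sum_eq_zero fun k hk => only_val k (by rintro rfl; exact h (Finset.mem_range.1 hk))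

end AddCommMonoid

variable {R : Type*} [Ring R]

theorem residueSum_coeff_mul_X_pow_sub_one (Q : R[X]) (r : ZMod n) (M : ℕ) :
    residueSum (Q * (X ^ n - 1)).coeff r M =
      -∑ k ∈ Finset.Ico (M - n) M with ((k : ℕ) : ZMod n) = r, Q.coeff k := by
  have low {J : ℕ} (hJ : J ≤ n) : residueSum (Q * X ^ n).coeff r J = 0 := by
    refine Finset.sum_eq_zero fun k hk => ?_
    have hkJ : k < J := Finset.mem_range.1 (Finset.mem_filter.1 hk).1
    rw [coeff_mul_X_pow', if_neg (hkJ.trans_le hJ).not_ge]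
  have shifted : residueSum (Q * X ^ n).coeff r M = residueSum Q.coeff r (M - n) := by
    rcases le_total M n with h | h
    · rw [Nat.sub_eq_zero_of_le h, residueSum_zero, low h]
    · obtain ⟨J, rfl⟩ := Nat.exists_eq_add_of_le h
      rw [residueSum_add, low le_rfl, zero_add, ZMod.natCast_self, sub_zero,
        Nat.add_sub_cancel_left]
      simp only [add_comm n, coeff_mul_X_pow]
  have split : residueSum Q.coeff r M = residueSum Q.coeff r (M - n) +
      ∑ k ∈ Finset.Ico (M - n) M with ((k : ℕ) : ZMod n) = r, Q.coeff k := by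
    simp only [residueSum, Finset.sum_filter]
    exact (Finset.sum_range_add_sum_Ico _ (Nat.sub_le M n)).symm
  have sub : residueSum (Q * (X ^ n - 1)).coeff r M =
      residueSum (Q * X ^ n).coeff r M - residueSum Q.coeff r M := by
    simp only [residueSum, mul_sub, mul_one, coeff_sub, Finset.sum_sub_distrib]
  rw [sub, shifted, split, sub_add_cancel_left]

theorem residueSum_coeff_mul_X_pow_sub_one_succ [NeZero n] (Q : R[X]) (m : ℕ) :
    residueSum (Q * (X ^ n - 1)).coeff (m : ZMod n) (m + 1) = -Q.coeff m := by
  have singleton : {k ∈ Finset.Ico (m + 1 - n) (m + 1) | ((k : ℕ) : ZMod n) = m} = {m} := by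
    ext k
    simp only [Finset.mem_filter, Finset.mem_Ico, Finset.mem_singleton]
    constructor
    · rintro ⟨hk, hkm⟩
      exact ((ZMod.natCast_eq_natCast_iff _ _ _).1 hkm).eq_of_abs_lt
        (abs_lt.2 (by constructor <;> omega))
    · rintro rfl
      have := NeZero.pos n
      exact ⟨by omega, rfl⟩
  rw [residueSum_coeff_mul_X_pow_sub_one, singleton, Finset.sum_singleton]

theorem residueSum_coeff_mul_X_pow_sub_one_eq_zero {Q : R[X]} {M : ℕ} (hM : Q.natDegree + n < M)
    (r : ZMod n) : residueSum (Q * (X ^ n - 1)).coeff r M = 0 := by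
  rw [residueSum_coeff_mul_X_pow_sub_one, neg_eq_zero]
  refine Finset.sum_eq_zero fun k hk => coeff_eq_zero_of_natDegree_lt ?_
  simp only [Finset.mem_filter, Finset.mem_Ico] at hk
  omega

theorem range_residueSum_coeff_mul_X_pow_sub_one [NeZero n] (Q : R[X]) :
    Set.range (residueSum (n := n) (Q * (X ^ n - 1)).coeff).uncurry = -Set.range Q.coeff := by
  apply Set.Subset.antisymm
  · rintro _ ⟨⟨r, M⟩, rfl⟩
    rw [Function.uncurry_apply_pair]
    induction M with
    | zero =>
      exact ⟨Q.natDegree + 1, by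
        rw [residueSum_zero, neg_zero, coeff_eq_zero_of_natDegree_lt (Nat.lt_succ_self _)]⟩
    | succ M ih =>
      by_cases h : (M : ZMod n) = r
      · subst h
        exact ⟨M, by rw [residueSum_coeff_mul_X_pow_sub_one_succ, neg_neg]⟩
      · rwa [residueSum_succ_of_ne _ h]
  · rintro x ⟨m, hm⟩
    refine ⟨(m, m + 1), ?_⟩
    rw [Function.uncurry_apply_pair, residueSum_coeff_mul_X_pow_sub_one_succ, hm, neg_neg]

end ResidueSum

section PartialConv

variable {n : ℕ}

section NonUnitalNonAssocSemiring

variable {R : Type*} [NonUnitalNonAssocSemiring R]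

/-- The partial sum `∑_{i < q} a_i c(r - s i)` of the value at `r` of the convolution of `c` with
the sequence `a` placed at the multiples of `s` in `ZMod n`. -/
def partialConv (a : ℕ → R) (c : ZMod n → R) (s r : ZMod n) (q : ℕ) : R :=
  ∑ i ∈ Finset.range q, a i * c (r - s * i)

theorem partialConv_zero (a : ℕ → R) (c : ZMod n → R) (s r : ZMod n) :
    partialConv a c s r 0 = 0 :=
  Finset.sum_range_zero _

theorem partialConv_succ (a : ℕ → R) (c : ZMod n → R) (s r : ZMod n) (q : ℕ) :
    partialConv a c s r (q + 1) = partialConv a c s r q + a q * c (r - s * q) :=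
  Finset.sum_range_succ _ _

variable {a : ℕ → R} {c : ZMod n → R} {s : ZMod n} {N : ℕ}

theorem partialConv_eq_of_le (ha : ∀ i, N < i → a i = 0) (r : ZMod n) {q : ℕ} (hq : N + 1 ≤ q) :
    partialConv a c s r q = partialConv a c s r (N + 1) :=
  Finset.eventually_constant_sum (fun i hi => by rw [ha i hi, zero_mul]) hq

theorem partialConv_neg_add (hsymm : ∀ i ≤ N, a (N - i) = a i) (r : ZMod n) {q : ℕ}
    (hq : q ≤ N + 1) :
    partialConv a c (-s) r q + partialConv a c s (r + s * N) (N + 1 - q) =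
      partialConv a c s (r + s * N) (N + 1) := by
  have reflected : partialConv a c (-s) r q =
      ∑ i ∈ Finset.Ico (N + 1 - q) (N + 1), a i * c (r + s * N - s * i) := by
    rw [partialConv, Finset.range_eq_Ico]
    refine Eq.trans ?_ (Finset.sum_Ico_reflect _ 0 hq)
    refine Finset.sum_congr rfl fun i hi => ?_
    have hi : i ≤ N := by have := (Finset.mem_Ico.1 hi).2; omega
    rw [hsymm i hi, Nat.cast_sub hi]
    congr 2
    ring
  rw [reflected, add_comm]
  exact Finset.sum_range_add_sum_Ico _ (Nat.sub_le _ _)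

end NonUnitalNonAssocSemiring

variable {R : Type*} [NonUnitalNonAssocRing R] {a : ℕ → R} {c : ZMod n → R} {s : ZMod n} {N : ℕ}

theorem partialConv_neg (hsymm : ∀ i ≤ N, a (N - i) = a i)
    (hfull : ∀ r, partialConv a c s r (N + 1) = 0) (r : ZMod n) {q : ℕ} (hq : q ≤ N + 1) :
    partialConv a c (-s) r q = -partialConv a c s (r + s * N) (N + 1 - q) :=
  eq_neg_of_add_eq_zero_left ((partialConv_neg_add hsymm r hq).trans (hfull _))

theorem range_partialConv_neg_subset (ha : ∀ i, N < i → a i = 0)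
    (hsymm : ∀ i ≤ N, a (N - i) = a i) (hfull : ∀ r, partialConv a c s r (N + 1) = 0) :
    Set.range (partialConv a c (-s)).uncurry ⊆ -Set.range (partialConv a c s).uncurry := by
  have initial (r : ZMod n) (q : ℕ) (hq : q ≤ N + 1) :
      partialConv a c (-s) r q ∈ -Set.range (partialConv a c s).uncurry :=
    ⟨(r + s * N, N + 1 - q), by
      rw [partialConv_neg hsymm hfull r hq, neg_neg, Function.uncurry_apply_pair]⟩
  rintro _ ⟨⟨r, q⟩, rfl⟩
  rcases le_total q (N + 1) with hq | hq
  · exact initial r q hq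
  · rw [Function.uncurry_apply_pair, partialConv_eq_of_le ha r hq]
    exact initial r (N + 1) le_rfl

theorem range_partialConv_neg (ha : ∀ i, N < i → a i = 0)
    (hsymm : ∀ i ≤ N, a (N - i) = a i) (hfull : ∀ r, partialConv a c s r (N + 1) = 0) :
    Set.range (partialConv a c (-s)).uncurry = -Set.range (partialConv a c s).uncurry := by
  have hfull_neg (r : ZMod n) : partialConv a c (-s) r (N + 1) = 0 := by
    rw [partialConv_neg hsymm hfull r le_rfl, Nat.sub_self, partialConv_zero, neg_zero]
  refine (range_partialConv_neg_subset ha hsymm hfull).antisymm ?_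
  simpa only [neg_neg, Set.neg_subset] using range_partialConv_neg_subset ha hsymm hfull_neg

end PartialConv

section ExpandMul

variable {R : Type*} [CommSemiring R] {s : ℕ} {P G : R[X]}

theorem coeff_expand_mul_of_natDegree_lt (hGs : G.natDegree < s) (i : ℕ) {j : ℕ} (hj : j < s) :
    (expand R s P * G).coeff (s * i + j) = P.coeff i * G.coeff j := by
  have hs : 0 < s := by omega
  rw [coeff_mul, Finset.sum_eq_single_of_mem (s * i, j) (by simp), coeff_expand_mul' hs]
  rintro ⟨u, v⟩ huv hne
  rw [Finset.HasAntidiagonal.mem_antidiagonal] at huv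
  rcases lt_or_ge v s with hv | hv
  · have not_dvd : ¬ s ∣ u := by
      rintro ⟨w, rfl⟩
      have hvj : v = j := by
        simpa [Nat.mul_add_mod, Nat.mod_eq_of_lt, hv, hj] using congrArg (· % s) huv
      exact hne (Prod.ext (by simp only; omega) hvj)
    rw [coeff_expand hs, if_neg not_dvd, zero_mul]
  · rw [coeff_eq_zero_of_natDegree_lt (hGs.trans_le hv), mul_zero]

variable {n : ℕ} [NeZero n]

theorem residueSum_coeff_expand_mul_add (hGn : G.natDegree < n) (hGs : G.natDegree < s)
    (r : ZMod n) (q : ℕ) {J : ℕ} (hJ : J ≤ s) :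
    residueSum (expand R s P * G).coeff r (s * q + J) =
      residueSum (expand R s P * G).coeff r (s * q) +
        P.coeff q * if (r - s * q).val < J then G.coeff (r - s * q).val else 0 := by
  have hG (k : ℕ) (hk : n ≤ k) : G.coeff k = 0 :=
    coeff_eq_zero_of_natDegree_lt (hGn.trans_le hk)
  rw [residueSum_add, Nat.cast_mul, ← residueSum_of_support_lt hG, residueSum, residueSum,
    residueSum, Finset.mul_sum]
  congr 1
  refine Finset.sum_congr rfl fun j hj => ?_
  have hjJ : j < J := Finset.mem_range.1 (Finset.mem_filter.1 hj).1
  exact coeff_expand_mul_of_natDegree_lt hGs q (hjJ.trans_le hJ)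

theorem residueSum_coeff_expand_mul (hGn : G.natDegree < n) (hGs : G.natDegree < s)
    (r : ZMod n) (q : ℕ) :
    residueSum (expand R s P * G).coeff r (s * q) =
      partialConv P.coeff (fun x => G.coeff x.val) s r q := by
  induction q with
  | zero => rw [mul_zero, residueSum_zero, partialConv_zero]
  | succ q ih =>
    rw [Nat.mul_succ, residueSum_coeff_expand_mul_add hGn hGs r q le_rfl, ih, partialConv_succ]
    split_ifs with h
    · rfl
    · rw [coeff_eq_zero_of_natDegree_lt (hGs.trans_le (not_lt.1 h))]

theorem range_residueSum_coeff_expand_mul (hGn : G.natDegree < n) (hGs : G.natDegree < s) :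
    Set.range (residueSum (n := n) (expand R s P * G).coeff).uncurry =
      Set.range (partialConv (n := n) P.coeff (fun x => G.coeff x.val) s).uncurry := by
  apply Set.Subset.antisymm
  · rintro _ ⟨⟨r, M⟩, rfl⟩
    have hs : 0 < s := by omega
    rw [Function.uncurry_apply_pair, ← Nat.div_add_mod M s,
      residueSum_coeff_expand_mul_add hGn hGs r _ (Nat.mod_lt M hs).le,
      residueSum_coeff_expand_mul hGn hGs]
    split_ifs
    · exact ⟨(r, M / s + 1), partialConv_succ _ _ _ _ _⟩
    · exact ⟨(r, M / s), by rw [mul_zero, add_zero, Function.uncurry_apply_pair]⟩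
  · rintro _ ⟨⟨r, q⟩, rfl⟩
    exact ⟨(r, s * q), residueSum_coeff_expand_mul hGn hGs r q⟩

end ExpandMul

section Quotient

variable {R : Type*} [CommRing R] {n s : ℕ} [NeZero n] {P G Q : R[X]}

theorem range_coeff_eq_neg_range_partialConv (hGn : G.natDegree < n) (hGs : G.natDegree < s)
    (hQ : Q * (X ^ n - 1) = expand R s P * G) :
    Set.range Q.coeff =
      -Set.range (partialConv (n := n) P.coeff (fun x => G.coeff x.val) s).uncurry := by
  rw [← range_residueSum_coeff_expand_mul hGn hGs, ← hQ,
    range_residueSum_coeff_mul_X_pow_sub_one, neg_neg]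

theorem partialConv_coeff_eq_zero (hGn : G.natDegree < n) (hGs : G.natDegree < s)
    (hQ : Q * (X ^ n - 1) = expand R s P * G) (r : ZMod n) :
    partialConv P.coeff (fun x => G.coeff x.val) s r (P.natDegree + 1) = 0 := by
  have hP (i : ℕ) (hi : P.natDegree < i) : P.coeff i = 0 := coeff_eq_zero_of_natDegree_lt hi
  set q := P.natDegree + Q.natDegree + n + 1
  have hq : q ≤ s * q := Nat.le_mul_of_pos_left q (by omega)
  rw [← partialConv_eq_of_le hP r (show P.natDegree + 1 ≤ q by omega),
    ← residueSum_coeff_expand_mul hGn hGs, ← hQ]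
  exact residueSum_coeff_mul_X_pow_sub_one_eq_zero (by omega) r

theorem range_coeff_eq_of_natCast_eq {t : ℕ} {Q' : R[X]} (hGn : G.natDegree < n)
    (hGs : G.natDegree < s) (hGt : G.natDegree < t)
    (hQ : Q * (X ^ n - 1) = expand R s P * G) (hQ' : Q' * (X ^ n - 1) = expand R t P * G)
    (hst : (s : ZMod n) = t) :
    Set.range Q.coeff = Set.range Q'.coeff := by
  rw [range_coeff_eq_neg_range_partialConv hGn hGs hQ,
    range_coeff_eq_neg_range_partialConv hGn hGt hQ', hst]

theorem range_coeff_eq_neg_of_natCast_eq_neg {t : ℕ} {Q' : R[X]} (hP : P.reverse = P)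
    (hGn : G.natDegree < n) (hGs : G.natDegree < s) (hGt : G.natDegree < t)
    (hQ : Q * (X ^ n - 1) = expand R s P * G) (hQ' : Q' * (X ^ n - 1) = expand R t P * G)
    (hst : (s : ZMod n) = -t) :
    Set.range Q.coeff = -Set.range Q'.coeff := by
  have hsymm (i : ℕ) (hi : i ≤ P.natDegree) : P.coeff (P.natDegree - i) = P.coeff i := by
    rw [← revAt_le hi, ← coeff_reverse, hP]
  rw [range_coeff_eq_neg_range_partialConv hGn hGs hQ,
    range_coeff_eq_neg_range_partialConv hGn hGt hQ', hst,
    range_partialConv_neg (fun _ => coeff_eq_zero_of_natDegree_lt) hsymm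
      (partialConv_coeff_eq_zero hGn hGt hQ')]

end Quotient

section Cyclotomic

theorem reverse_cyclotomic {n : ℕ} (hn : 1 < n) : (cyclotomic n ℤ).reverse = cyclotomic n ℤ := by
  have hn0 : 0 < n := by omega
  have hζ := Complex.isPrimitiveRoot_exp n hn0.ne'
  set ζ := Complex.exp (2 * Real.pi * Complex.I / n)
  have hmonic : (cyclotomic n ℤ).reverse.Monic := by
    have hcoeff := cyclotomic_coeff_zero ℤ hn
    rw [Monic, reverse_leadingCoeff, trailingCoeff_eq_coeff_zero (by simp [hcoeff]), hcoeff]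
  have hroot : aeval ζ (cyclotomic n ℤ).reverse = 0 := by
    let _ : Invertible ζ⁻¹ := invertibleOfNonzero (inv_ne_zero (hζ.ne_zero hn0.ne'))
    have hinv : (cyclotomic n ℤ).eval₂ (algebraMap ℤ ℂ) ζ⁻¹ = 0 := by
      have := hζ.inv.isRoot_cyclotomic hn0
      rwa [IsRoot.def, ← map_cyclotomic_int, eval_map] at this
    simpa only [aeval_def, invOf_eq_inv, inv_inv] using (eval₂_reverse_eq_zero_iff _ _ _).2 hinv
  have hdvd : cyclotomic n ℤ ∣ (cyclotomic n ℤ).reverse := by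
    rw [cyclotomic_eq_minpoly hζ hn0] at hroot ⊢
    exact minpoly.isIntegrallyClosed_dvd (hζ.isIntegral hn0) hroot
  exact eq_of_monic_of_dvd_of_natDegree_le (cyclotomic.monic n ℤ) hmonic hdvd
    (reverse_natDegree_le _)

/-- The inverse cyclotomic polynomial `Ψ_n = (X ^ n - 1) / Φ_n`. -/
noncomputable def inverseCyclotomic (n : ℕ) : ℤ[X] :=
  ∏ d ∈ n.properDivisors, cyclotomic d ℤ

theorem cyclotomic_mul_inverseCyclotomic {n : ℕ} (hn : n ≠ 0) :
    cyclotomic n ℤ * inverseCyclotomic n = X ^ n - 1 := by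
  rw [← prod_cyclotomic_eq_X_pow_sub_one (Nat.pos_of_ne_zero hn) ℤ,
    ← Nat.cons_self_properDivisors hn, Finset.prod_cons, inverseCyclotomic]

theorem natDegree_inverseCyclotomic {n : ℕ} (hn : n ≠ 0) :
    (inverseCyclotomic n).natDegree = n - n.totient := by
  have hne : inverseCyclotomic n ≠ 0 := Finset.prod_ne_zero_iff.2 fun d _ => cyclotomic_ne_zero d ℤ
  have hdeg : n.totient + (inverseCyclotomic n).natDegree = n := by
    rw [← natDegree_cyclotomic n ℤ, ← natDegree_mul (cyclotomic_ne_zero n ℤ) hne,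
      cyclotomic_mul_inverseCyclotomic hn]
    exact natDegree_X_pow_sub_C (r := 1)
  omega

theorem natDegree_inverseCyclotomic_lt {n : ℕ} (hn : n ≠ 0) :
    (inverseCyclotomic n).natDegree < n := by
  have := Nat.totient_pos.2 (Nat.pos_of_ne_zero hn)
  rw [natDegree_inverseCyclotomic hn]
  omega

theorem cyclotomic_mul_prime_mul_X_pow_sub_one {n p : ℕ} (hn : n ≠ 0) (hp : p.Prime)
    (hpn : ¬ p ∣ n) :
    cyclotomic (n * p) ℤ * (X ^ n - 1) = expand ℤ p (cyclotomic n ℤ) * inverseCyclotomic n := by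
  rw [cyclotomic_expand_eq_cyclotomic_mul hp hpn, mul_assoc, cyclotomic_mul_inverseCyclotomic hn]

theorem range_coeff_cyclotomic_mul_prime {n s t : ℕ} (hn : n ≠ 0) (hs : s.Prime) (ht : t.Prime)
    (hsn : ¬ s ∣ n) (htn : ¬ t ∣ n) (hns : n - n.totient < s) (hnt : n - n.totient < t)
    (hst : (s : ZMod n) = t ∨ (s : ZMod n) = -t) :
    Set.range (cyclotomic (n * s) ℤ).coeff = Set.range (cyclotomic (n * t) ℤ).coeff ∨
      Set.range (cyclotomic (n * s) ℤ).coeff = -Set.range (cyclotomic (n * t) ℤ).coeff := by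
  have : NeZero n := ⟨hn⟩
  have hΨn := natDegree_inverseCyclotomic_lt hn
  rw [← natDegree_inverseCyclotomic hn] at hns hnt
  have hΦs := cyclotomic_mul_prime_mul_X_pow_sub_one hn hs hsn
  have hΦt := cyclotomic_mul_prime_mul_X_pow_sub_one hn ht htn
  rcases (Nat.one_le_iff_ne_zero.2 hn).eq_or_lt with rfl | h1
  · exact .inl (range_coeff_eq_of_natCast_eq hΨn hns hnt hΦs hΦt (Subsingleton.elim _ _))
  · exact hst.imp (range_coeff_eq_of_natCast_eq hΨn hns hnt hΦs hΦt)
      (range_coeff_eq_neg_of_natCast_eq_neg (reverse_cyclotomic h1) hΨn hns hnt hΦs hΦt)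

theorem cyclotomicHeight_le_iff {m b : ℕ} :
    cyclotomicHeight m ≤ b ↔ ∀ x ∈ Set.range (cyclotomic m ℤ).coeff, x.natAbs ≤ b := by
  rw [cyclotomicHeight, Finset.sup_le_iff, Set.forall_mem_range]
  refine forall_congr' fun k => ⟨fun h => ?_, fun h _ => h⟩
  by_cases hk : k ∈ (cyclotomic m ℤ).support
  · exact h hk
  · simp [notMem_support_iff.1 hk]

theorem cyclotomicHeight_eq_of_range_coeff {m m' : ℕ}
    (h : Set.range (cyclotomic m ℤ).coeff = Set.range (cyclotomic m' ℤ).coeff ∨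
      Set.range (cyclotomic m ℤ).coeff = -Set.range (cyclotomic m' ℤ).coeff) :
    cyclotomicHeight m = cyclotomicHeight m' := by
  refine eq_of_forall_ge_iff fun b => ?_
  rw [cyclotomicHeight_le_iff, cyclotomicHeight_le_iff]
  rcases h with h | h
  · rw [h]
  · rw [h, ← Set.image_neg_eq_neg, Set.forall_mem_image]
    simp only [Int.natAbs_neg]

end Cyclotomic

theorem not_dvd_of_modEq_or_modEq_neg {n s t : ℕ} (hs : s.Prime) (ht : t.Prime) (hne : s ≠ t)
    (h : (s : ℤ) ≡ t [ZMOD n] ∨ (s : ℤ) ≡ -t [ZMOD n]) : ¬ s ∣ n := by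
  intro hsn
  have hsn' : (s : ℤ) ∣ n := Int.natCast_dvd_natCast.2 hsn
  have hst : (s : ℤ) ∣ t := by
    rcases h with h | h
    · exact (dvd_sub_self_right).1 (h.of_dvd hsn').dvd
    · exact dvd_neg.1 ((dvd_sub_self_right).1 (h.of_dvd hsn').dvd)
  exact hne ((Nat.prime_dvd_prime_iff_eq hs ht).1 (Int.natCast_dvd_natCast.1 hst))

theorem cyclotomic_extended_periodicity (n s t : ℕ) (hn : 0 < n)
    (hs : s.Prime) (ht : t.Prime) (hns : n - n.totient < s) (hst : s < t)
    (hmod : (s : ℤ) ≡ (t : ℤ) [ZMOD (n : ℤ)] ∨ (s : ℤ) ≡ -(t : ℤ) [ZMOD (n : ℤ)]) :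
    cyclotomicHeight (n * s) = cyclotomicHeight (n * t) := by
  have hmod_symm : (t : ℤ) ≡ s [ZMOD n] ∨ (t : ℤ) ≡ -s [ZMOD n] :=
    hmod.imp Int.ModEq.symm fun h => by simpa only [neg_neg] using h.symm.neg
  have hsn : ¬ s ∣ n := not_dvd_of_modEq_or_modEq_neg hs ht hst.ne hmod
  have htn : ¬ t ∣ n := not_dvd_of_modEq_or_modEq_neg ht hs hst.ne' hmod_symm
  have hmod_cast : (s : ZMod n) = t ∨ (s : ZMod n) = -t := by
    simpa only [← ZMod.intCast_eq_intCast_iff, Int.cast_neg, Int.cast_natCast] using hmod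
  exact cyclotomicHeight_eq_of_range_coeff
    (range_coeff_cyclotomic_mul_prime hn.ne' hs ht hsn htn hns (hns.trans hst) hmod_cast)
end

section
/- Let p, q, r be primes with (p, q, r pairwise distinct) and let w be an integer with r ≡ w (mod pq). Then the height of Φ_{pqr} satisfies A(pqr) ≤ |w|. -/
/-!
Write `M = pq` and `f = Φ_{pq}`. Since `Φ_{pqr}(x) = f(x ^ r) / f(x)` and
`1 / f = (1 - x ^ p) (1 - x ^ q) / ((1 - x) (1 - x ^ M))`, the `n`-th coefficient of `Φ_{pqr}` is
a mixed difference, with steps `p` and `q`, of `k ↦ ∑_{j ≤ n / r} a_j ⌊(k - r j) / M⌋`, where `a_j`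
are the coefficients of `f`. Modulo `M` the factor `r` may be replaced by `w`; substituting
`k ↦ u k` with `u w ≡ 1` then turns this function into a sum of `|w|` translates of the one with
`r = 1`, up to sign and an affine function, which mixed differences annihilate. It remains to
bound by `1` the mixed differences, with steps divisible by `p` and `q`, for `r = 1`. The partial
sums of the `a_j` are indicators of the semigroup generated by `p` and `q`; hence, in the
coordinates `k = x p + y q`, the function is a sum of a function of `x`, a function of `y` and, up
to sign, the indicator of a half plane.
-/

open Polynomial Finset
open scoped fwdDiff

section ForwardDifference

variable {G : Type*} [AddCommGroup G] {f g : ℤ → G} {c : G}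

theorem exists_eq_sum_range_add_of_fwdDiff_one_eq {w : ℕ}
    (h : ∀ k, Δ_[1] f k = Δ_[(w : ℤ)] g k + c) :
    ∃ d, ∀ k, f k = ∑ l ∈ range w, g (k + l) + k • c + d := by
  have hper : Function.Periodic (fun k => f k - (∑ l ∈ range w, g (k + l) + k • c)) 1 := by
    intro k
    have telescope : ∑ l ∈ range w, g (k + 1 + l) - ∑ l ∈ range w, g (k + l) = Δ_[(w : ℤ)] g k := by
      rw [← sum_sub_distrib, fwdDiff, ← add_zero k]
      simpa [add_right_comm, add_assoc] using sum_range_sub (fun l : ℕ => g (k + l)) w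
    have hk := h k
    rw [← telescope, fwdDiff, sub_eq_iff_eq_add] at hk
    simp only [hk, add_zsmul, one_zsmul]
    abel
  refine ⟨f 0 - ∑ l ∈ range w, g l, fun k => ?_⟩
  have hk : f k - (∑ l ∈ range w, g (k + l) + k • c) = f 0 - ∑ l ∈ range w, g l := by
    simpa using hper.int_mul_eq k
  rw [← hk]
  abel

theorem abs_fwdDiff_fwdDiff_le_of_fwdDiff_one_eq [LinearOrder G] [IsOrderedAddMonoid G]
    {w a b : ℤ} {C : G} (h : ∀ k, Δ_[1] f k = Δ_[w] g k + c)
    (hg : ∀ k, |Δ_[a] (Δ_[b] g) k| ≤ C) (k : ℤ) :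
    |Δ_[a] (Δ_[b] f) k| ≤ w.natAbs • C := by
  wlog hw : 0 ≤ w generalizing g w
  · rw [← Int.natAbs_neg]
    refine this (g := fun k => -g (k + w)) (fun k => ?_) (fun k => ?_) (by lia)
    · rw [h k]
      simp only [fwdDiff, neg_add_cancel_right]
      abel
    · refine le_of_eq_of_le ?_ (hg (k + w))
      rw [← abs_neg]
      simp only [fwdDiff, add_right_comm _ _ w]
      congr 1
      abel
  lift w to ℕ using hw
  obtain ⟨d, hd⟩ := exists_eq_sum_range_add_of_fwdDiff_one_eq h
  have key : Δ_[a] (Δ_[b] f) k = ∑ l ∈ range w, Δ_[a] (Δ_[b] g) (k + l) := by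
    simp only [fwdDiff, hd, sum_sub_distrib, add_zsmul, add_right_comm _ (_ : ℤ) ((_ : ℕ) : ℤ)]
    abel
  calc |Δ_[a] (Δ_[b] f) k|
      ≤ ∑ l ∈ range w, |Δ_[a] (Δ_[b] g) (k + l)| := key ▸ abs_sum_le_sum_abs _ _
    _ ≤ w • C := by simpa using sum_le_card_nsmul (range w) _ C fun l _ => hg (k + l)

end ForwardDifference

theorem abs_mixed_sub_indicator_le_one (x₁ x₂ y₁ y₂ T : ℤ) :
    |((if x₂ + y₂ ≤ T then 1 else 0) - (if x₂ + y₁ ≤ T then 1 else 0))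
      - ((if x₁ + y₂ ≤ T then 1 else 0) - (if x₁ + y₁ ≤ T then (1 : ℤ) else 0))| ≤ 1 := by
  grind

theorem add_one_ediv_sub_ediv {M : ℤ} (hM : 0 < M) (k : ℤ) :
    (k + 1) / M - k / M = if M ∣ k + 1 then 1 else 0 := by
  have hdivmod := Int.emod_add_mul_ediv (k + 1) M
  have hmod_lt := Int.emod_lt_of_pos (k + 1) hM
  split_ifs with h
  · have hmod := Int.emod_eq_zero_of_dvd h
    have hdiv : k / M = (k + 1) / M - 1 := by
      rw [Int.ediv_eq_iff_of_pos hM]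
      constructor <;> linarith
    rw [hdiv, sub_sub_cancel]
  · have hmod := Int.emod_pos_of_not_dvd h
    have hdiv : k / M = (k + 1) / M := by
      rw [Int.ediv_eq_iff_of_pos hM]
      constructor <;> lia
    rw [hdiv, sub_self]

/-- The sum of the terms of `a` with index at most `k`; it vanishes for negative `k`. -/
def partialSum (a : ℕ → ℤ) (k : ℤ) : ℤ := ∑ j ∈ range (k + 1).toNat, a j

theorem partialSum_natCast (a : ℕ → ℤ) (n : ℕ) : partialSum a n = ∑ j ∈ range (n + 1), a j := rfl

theorem partialSum_of_neg (a : ℕ → ℤ) {k : ℤ} (hk : k < 0) : partialSum a k = 0 := by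
  simp [partialSum, show (k + 1).toNat = 0 by lia]

theorem coeff_mul_geom_sum (f : ℤ[X]) (k q : ℕ) :
    (f * ∑ i ∈ range q, X ^ i).coeff k = partialSum f.coeff k - partialSum f.coeff (k - q) := by
  induction q with
  | zero => simp
  | succ q ih =>
    rw [sum_range_succ, mul_add, coeff_add, ih, coeff_mul_X_pow']
    split_ifs with h
    · have e1 : ((k : ℤ) - q + 1).toNat = k - q + 1 := by lia
      have e2 : ((k : ℤ) - (q + 1 : ℕ) + 1).toNat = k - q := by lia
      simp only [partialSum, e1, e2, sum_range_succ]
      ring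
    · rw [partialSum_of_neg _ (show (k : ℤ) - q < 0 by lia),
        partialSum_of_neg _ (show (k : ℤ) - (q + 1 : ℕ) < 0 by lia)]
      ring

/-- The weighted sum of floors `∑_{j ≤ N} a_j ⌊(k - r j) / M⌋`. Its mixed differences in `k` are
the coefficients of ternary inclusion–exclusion polynomials. -/
def floorSum (a : ℕ → ℤ) (M : ℤ) (N : ℕ) (r k : ℤ) : ℤ :=
  ∑ j ∈ range (N + 1), a j * ((k - r * j) / M)

section FloorSum

variable (a : ℕ → ℤ) {M : ℤ} (N : ℕ)

theorem floorSum_add_mul (hM : M ≠ 0) (r k z : ℤ) :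
    floorSum a M N r (k + M * z) = floorSum a M N r k + partialSum a N * z := by
  rw [partialSum_natCast, floorSum, floorSum, sum_mul, ← sum_add_distrib]
  refine sum_congr rfl fun j _ => ?_
  rw [add_sub_right_comm, Int.add_mul_ediv_left _ _ hM, mul_add]

theorem fwdDiff_one_floorSum (hM : 0 < M) (r k : ℤ) :
    Δ_[1] (floorSum a M N r) k =
      ∑ j ∈ range (N + 1), a j * if M ∣ k + 1 - r * j then 1 else 0 := by
  rw [fwdDiff, floorSum, floorSum, ← sum_sub_distrib]
  refine sum_congr rfl fun j _ => ?_
  rw [← mul_sub, add_sub_right_comm, add_one_ediv_sub_ediv hM]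

theorem fwdDiff_one_floorSum_eq_fwdDiff_floorSum_one (hM : 0 < M) {r w u t : ℤ}
    (hrw : r ≡ w [ZMOD M]) (hu : u * w = 1 + M * t) (k : ℤ) :
    Δ_[1] (floorSum a M N r) k =
      Δ_[w] (fun k => floorSum a M N 1 (u * (k + 1) - 1)) k + -(partialSum a N * t) := by
  have hdvd (j : ℕ) : M ∣ k + 1 - r * j ↔ M ∣ u * (k + 1) - 1 * j := by
    obtain ⟨z, hz⟩ := hrw.dvd
    constructor
    · rintro ⟨m, hm⟩
      exact ⟨u * m - (u * z - t) * j, by linear_combination u * hm + (hu - u * hz) * j⟩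
    · rintro ⟨m, hm⟩
      exact ⟨w * m - t * (k + 1) + z * j, by linear_combination w * hm + hz * j - (k + 1) * hu⟩
  have hshift : u * (k + w + 1) - 1 = u * (k + 1) + M * t := by linear_combination hu
  have hone := fwdDiff_one_floorSum a N hM 1 (u * (k + 1) - 1)
  simp only [fwdDiff, sub_add_cancel] at hone
  rw [fwdDiff_one_floorSum a N hM, fwdDiff, hshift, floorSum_add_mul a N hM.ne']
  simp only [hdvd]
  linear_combination -hone

theorem floorSum_one_eq_partialSum_min_sub (hN : N < M) {k : ℤ} (hk : 0 ≤ k) (hkM : k < M) :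
    floorSum a M N 1 k = partialSum a (min k N) - partialSum a N := by
  lift k to ℕ using hk
  have hdiv {j : ℕ} (hj : j ≤ N) : ((k : ℤ) - 1 * j) / M = (if j ≤ k then 1 else 0) - 1 := by
    rw [Int.ediv_eq_iff_of_pos (by lia)]
    split_ifs <;> constructor <;> lia
  have hmin : range (min k N + 1) = {j ∈ range (N + 1) | j ≤ k} := by
    ext j
    simp only [mem_range, mem_filter]
    lia
  rw [← Nat.cast_min, partialSum_natCast, partialSum_natCast, hmin, sum_filter, floorSum,
    ← sum_sub_distrib]
  refine sum_congr rfl fun j hj => ?_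
  rw [hdiv (by simpa [Nat.lt_succ_iff] using hj)]
  split_ifs <;> ring

end FloorSum

theorem one_sub_X_pow_ne_zero {R : Type*} [Ring R] [Nontrivial R] {n : ℕ} (hn : 0 < n) :
    (1 - X ^ n : R[X]) ≠ 0 := by
  rw [← neg_ne_zero, neg_sub]
  exact X_pow_sub_C_ne_zero hn 1

/-- `f` is the binary inclusion–exclusion polynomial
`(1 - x) (1 - x ^ (p q)) / ((1 - x ^ p) (1 - x ^ q))` of the coprime integers `p, q > 1`. For
distinct primes it is the cyclotomic polynomial `Φ_{pq}`. -/
structure IsInclusionExclusion (f : ℤ[X]) (p q : ℕ) : Prop where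
  one_lt_left : 1 < p
  one_lt_right : 1 < q
  coprime : p.Coprime q
  mul_eq : f * ((1 - X ^ p) * (1 - X ^ q)) = (1 - X) * (1 - X ^ (p * q))

theorem isInclusionExclusion_cyclotomic {p q : ℕ} (hp : p.Prime) (hq : q.Prime) (hpq : p ≠ q) :
    IsInclusionExclusion (cyclotomic (p * q) ℤ) p q where
  one_lt_left := hp.one_lt
  one_lt_right := hq.one_lt
  coprime := (Nat.coprime_primes hp hq).mpr hpq
  mul_eq := by
    have : Fact q.Prime := ⟨hq⟩
    have hq_mul := cyclotomic_prime_mul_X_sub_one ℤ q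
    have hpq_mul := congrArg (expand ℤ p) hq_mul
    rw [map_mul, cyclotomic_expand_eq_cyclotomic_mul hp
      (mt (Nat.prime_dvd_prime_iff_eq hp hq).mp hpq), mul_comm q p] at hpq_mul
    simp only [map_sub, map_pow, map_one, expand_X, ← pow_mul] at hpq_mul
    linear_combination (X - 1) * hpq_mul - cyclotomic (p * q) ℤ * (X ^ p - 1) * hq_mul

/-- The power series `1 / ((1 - x) (1 - x ^ M))`. -/
noncomputable def floorSeries (M : ℕ) : PowerSeries ℤ := .mk fun i => ((i / M : ℕ) : ℤ) + 1

section FloorSeries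

variable {M : ℕ}

theorem one_sub_mul_floorSeries (hM : 0 < M) :
    (1 - PowerSeries.X) * (1 - PowerSeries.X ^ M) * floorSeries M = 1 := by
  have h : (1 - PowerSeries.X ^ M) * floorSeries M = PowerSeries.mk 1 := by
    ext i
    rw [sub_mul, one_mul, map_sub, PowerSeries.coeff_X_pow_mul']
    simp only [floorSeries, PowerSeries.coeff_mk, Pi.one_apply]
    split_ifs with hi
    · rw [Nat.div_eq_sub_div hM hi]
      push_cast
      ring
    · simp [Nat.div_eq_of_lt (not_le.mp hi)]
  rw [mul_assoc, h, mul_comm, PowerSeries.mk_one_mul_one_sub_eq_one]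

theorem coeff_X_pow_mul_floorSeries (hM : 0 < M) {a : ℕ} (ha : a ≤ M) (i : ℕ) :
    PowerSeries.coeff i (PowerSeries.X ^ a * floorSeries M) = ((i : ℤ) - a) / M + 1 := by
  rw [PowerSeries.coeff_X_pow_mul']
  split_ifs with h
  · simp [floorSeries, Nat.cast_sub h]
  · rw [(Int.ediv_eq_iff_of_pos (by lia)).mpr (by lia : (-1) * (M : ℤ) ≤ i - a ∧ _)]
    norm_num

end FloorSeries

theorem coeff_expand_mul_powerSeries {R : Type*} [CommRing R] (f : R[X]) (g : PowerSeries R)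
    {r : ℕ} (hr : 0 < r) (n : ℕ) :
    PowerSeries.coeff n ((expand R r f : PowerSeries R) * g) =
      ∑ j ∈ range (n / r + 1), f.coeff j * PowerSeries.coeff (n - r * j) g := by
  let m := f.natDegree + n / r + 1
  have hm : {j ∈ range m | r * j ≤ n} = range (n / r + 1) := by
    ext j
    have hj : r * j ≤ n ↔ j ≤ n / r := by rw [Nat.le_div_iff_mul_le hr, mul_comm]
    rw [mem_filter, mem_range, mem_range, hj]
    lia
  rw [expand_eq_sum, f.sum_over_range' (by simp) m (by lia), ← hm, sum_filter]
  simp only [← coeToPowerSeries.ringHom_apply, map_sum, sum_mul]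
  refine sum_congr rfl fun j _ => ?_
  simp [mul_assoc, ← pow_mul, PowerSeries.coeff_X_pow_mul']

namespace IsInclusionExclusion

variable {f : ℤ[X]} {p q : ℕ} (hf : IsInclusionExclusion f p q)
include hf

theorem left_pos : 0 < p := zero_lt_one.trans hf.one_lt_left

theorem right_pos : 0 < q := zero_lt_one.trans hf.one_lt_right

theorem mul_geom_sum_eq : f * ∑ i ∈ range q, X ^ i = ∑ i ∈ range q, (X ^ p) ^ i := by
  refine mul_right_cancel₀ (mul_ne_zero (one_sub_X_pow_ne_zero one_pos)
    (one_sub_X_pow_ne_zero hf.left_pos)) ?_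
  have hq := geom_sum_mul_neg (X : ℤ[X]) q
  have hpq := geom_sum_mul_neg (X ^ p : ℤ[X]) q
  rw [← pow_mul] at hpq
  linear_combination f * (1 - X ^ p) * hq - (1 - X) * hpq + hf.mul_eq

theorem partialSum_eq_partialSum_sub_add (k : ℤ) :
    partialSum f.coeff k = partialSum f.coeff (k - q) +
      if 0 ≤ k ∧ k < p * q ∧ (p : ℤ) ∣ k then 1 else 0 := by
  have hp := hf.left_pos
  rcases lt_or_ge k 0 with hk | hk
  · simp [partialSum_of_neg, hk, show k - q < 0 by lia, hk.not_ge]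
  · lift k to ℕ using hk
    have hcoeff : (∑ i ∈ range q, (X ^ p) ^ i : ℤ[X]).coeff k =
        if k < p * q ∧ p ∣ k then 1 else 0 := by
      have hexpand : ∑ i ∈ range q, (X ^ p) ^ i = expand ℤ p (∑ i ∈ range q, X ^ i) := by simp
      rw [hexpand, coeff_expand hp, finsetSum_coeff]
      simp [coeff_X_pow, Nat.div_lt_iff_lt_mul hp, mul_comm q, ← ite_and, and_comm]
    rw [← sub_eq_iff_eq_add', ← coeff_mul_geom_sum, hf.mul_geom_sum_eq, hcoeff]
    norm_cast
    simp

theorem partialSum_mul_add_mul {x y : ℤ} (hx : 0 ≤ x) (hxq : x < q) (hy : -p ≤ y) (hyp : y < p) :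
    partialSum f.coeff (x * p + y * q) = if 0 ≤ y then 1 else 0 := by
  have hp : (0 : ℤ) < p := by exact_mod_cast hf.left_pos
  have hdvd (y : ℤ) : (p : ℤ) ∣ x * p + y * q ↔ (p : ℤ) ∣ y := by
    rw [Int.dvd_add_right (Dvd.intro_left x rfl)]
    exact ⟨(Nat.isCoprime_iff_coprime.mpr hf.coprime).dvd_of_dvd_mul_right,
      fun h => h.mul_right _⟩
  induction y, hy using Int.leInduction with
  | base => rw [partialSum_of_neg _ (by nlinarith), if_neg (by lia)]
  | succ y hy ih =>
    rw [hf.partialSum_eq_partialSum_sub_add,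
      show x * p + (y + 1) * q - q = x * p + y * q by ring, ih (by lia)]
    simp only [hdvd]
    rcases eq_or_ne y (-1) with rfl | hy1
    · have hx_lt : x * p < p * q := by nlinarith
      simp [hx_lt, mul_nonneg hx hp.le]
    · have hndvd : ¬ (p : ℤ) ∣ y + 1 := fun h => by
        have := Int.eq_zero_of_abs_lt_dvd h (by grind)
        lia
      grind

theorem partialSum_eq_zero_or_eq_one {k : ℤ} (hk : 0 ≤ k) (hkM : k < p * q) :
    partialSum f.coeff k = 0 ∨ partialSum f.coeff k = 1 := by
  have hp : (0 : ℤ) < p := by exact_mod_cast hf.left_pos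
  have hq : (0 : ℤ) < q := by exact_mod_cast hf.right_pos
  obtain ⟨b, c, hbc⟩ := Nat.isCoprime_iff_coprime.mpr hf.coprime
  have hx := Int.emod_nonneg (k * b) hq.ne'
  have hxq := Int.emod_lt_of_pos (k * b) hq
  obtain ⟨y, hy⟩ : ∃ y, k = k * b % q * p + y * q :=
    ⟨k * c + k * b / q * p,
      by linear_combination -k * hbc - p * Int.emod_add_mul_ediv (k * b) q⟩
  rw [hy, hf.partialSum_mul_add_mul hx hxq (by nlinarith) (by nlinarith)]
  split_ifs <;> simp

theorem floorSum_mul_add_mul {N : ℕ} (hN : N < p * q) {x y : ℤ} (hx : 0 ≤ x) (hxq : x < q)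
    (hy : 0 ≤ y) (hyp : y < p) :
    floorSum f.coeff (p * q) N 1 (x * p + y * q) =
      if x * p + y * q < p * q then
        if x * p + y * q ≤ N then 1 - partialSum f.coeff N else 0
      else
        if x * p + y * q ≤ p * q + N then 0 else partialSum f.coeff N := by
  have hN' : (N : ℤ) < p * q := by exact_mod_cast hN
  have hM : (p * q : ℤ) ≠ 0 := by lia
  split_ifs with hlt hle hle
  · rw [floorSum_one_eq_partialSum_min_sub _ _ hN' (by positivity) hlt, min_eq_left hle,
      hf.partialSum_mul_add_mul hx hxq (by lia) hyp, if_pos hy]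
  · rw [floorSum_one_eq_partialSum_min_sub _ _ hN' (by positivity) hlt,
      min_eq_right (le_of_not_ge hle), sub_self]
  all_goals
    rw [show x * p + y * q = x * p + (y - p) * q + p * q * 1 by ring, floorSum_add_mul _ _ hM,
      floorSum_one_eq_partialSum_min_sub _ _ hN' (by linarith) (by nlinarith)]
  · rw [min_eq_left (by linarith), hf.partialSum_mul_add_mul hx hxq (by lia) (by lia),
      if_neg (by lia)]
    ring
  · rw [min_eq_right (by linarith)]
    ring

theorem exists_floorSum_eq_add_indicator {N : ℕ} (hN : N < p * q) :
    ∃ (α β : ℤ → ℤ) (ε T : ℤ), |ε| ≤ 1 ∧ ∀ x y : ℤ,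
      floorSum f.coeff (p * q) N 1 (x * p + y * q) =
        α x + β y + ε * if x % q * p + y % p * q ≤ T then 1 else 0 := by
  have hp : (0 : ℤ) < p := by exact_mod_cast hf.left_pos
  have hq : (0 : ℤ) < q := by exact_mod_cast hf.right_pos
  have hN' : (N : ℤ) < p * q := by exact_mod_cast hN
  set S := partialSum f.coeff N with hS
  have hreduce (x y : ℤ) : floorSum f.coeff (p * q) N 1 (x * p + y * q) =
      floorSum f.coeff (p * q) N 1 (x % q * p + y % p * q) + S * (x / q + y / p) := by
    rw [← floorSum_add_mul _ _ (by positivity)]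
    congr 1
    linear_combination -p * Int.emod_add_mul_ediv x q - q * Int.emod_add_mul_ediv y p
  have hbox (x y : ℤ) := hf.floorSum_mul_add_mul hN (Int.emod_nonneg x hq.ne')
    (Int.emod_lt_of_pos x hq) (Int.emod_nonneg y hp.ne') (Int.emod_lt_of_pos y hp)
  rcases hf.partialSum_eq_zero_or_eq_one N.cast_nonneg hN' with h0 | h1
  · refine ⟨0, 0, 1, N, by simp, fun x y => ?_⟩
    rw [hreduce, hbox, hS, h0]
    simp only [Pi.zero_apply]
    split_ifs <;> lia
  · refine ⟨fun x => x / q + 1, fun y => y / p, -1, p * q + N, by simp, fun x y => ?_⟩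
    rw [hreduce, hbox, hS, h1]
    split_ifs <;> lia

theorem abs_fwdDiff_fwdDiff_floorSum_one_le {N : ℕ} (hN : N < p * q) (s t k : ℤ) :
    |Δ_[s * p] (Δ_[t * q] (floorSum f.coeff (p * q) N 1)) k| ≤ 1 := by
  obtain ⟨α, β, ε, T, hε, hB⟩ := hf.exists_floorSum_eq_add_indicator hN
  obtain ⟨b, c, hbc⟩ := Nat.isCoprime_iff_coprime.mpr hf.coprime
  obtain ⟨x, y, rfl⟩ : ∃ x y, k = x * p + y * q :=
    ⟨k * b, k * c, by linear_combination -k * hbc⟩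
  have hind := abs_mixed_sub_indicator_le_one
    (x % q * p) ((x + s) % q * p) (y % p * q) ((y + t) % p * q) T
  have e1 : x * p + y * q + s * p = (x + s) * p + y * q := by ring
  have e2 (z : ℤ) : z * p + y * q + t * q = z * p + (y + t) * q := by ring
  simp only [fwdDiff, e1, e2, hB]
  refine le_of_eq_of_le ?_ ((abs_mul ε _).trans_le (mul_le_one₀ hε (abs_nonneg _) hind))
  congr 1
  ring

theorem abs_fwdDiff_fwdDiff_floorSum_le {N : ℕ} (hN : N < p * q) {r w : ℤ}
    (hrw : r ≡ w [ZMOD p * q]) (hr : IsCoprime r (p * q)) (k : ℤ) :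
    |Δ_[(p : ℤ)] (Δ_[(q : ℤ)] (floorSum f.coeff (p * q) N r)) k| ≤ w.natAbs := by
  have hM : (0 : ℤ) < p * q := by exact_mod_cast N.zero_le.trans_lt hN
  obtain ⟨u, t, hu⟩ : ∃ u t, u * w = 1 + p * q * t := by
    obtain ⟨b, c, hbc⟩ := hr
    obtain ⟨z, hz⟩ := hrw.dvd
    exact ⟨b, b * z - c, by linear_combination hbc + b * hz⟩
  have htwist := fwdDiff_one_floorSum_eq_fwdDiff_floorSum_one f.coeff N hM hrw hu
  refine (abs_fwdDiff_fwdDiff_le_of_fwdDiff_one_eq (C := 1) htwist (fun k => ?_) k).trans_eq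
    (by simp)
  refine le_of_eq_of_le ?_ (hf.abs_fwdDiff_fwdDiff_floorSum_one_le hN u u (u * (k + 1) - 1))
  simp only [fwdDiff]
  ring_nf

theorem ne_zero : f ≠ 0 := by
  rintro rfl
  have h : (1 - X ^ 1 : ℤ[X]) * (1 - X ^ (p * q)) = 0 := by
    rw [pow_one, ← hf.mul_eq, zero_mul]
  exact mul_ne_zero (one_sub_X_pow_ne_zero one_pos)
    (one_sub_X_pow_ne_zero (mul_pos hf.left_pos hf.right_pos)) h

theorem natDegree_lt : f.natDegree < p * q := by
  have hp := hf.one_lt_left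
  have hq := hf.one_lt_right
  have hne {n : ℕ} (hn : 0 < n) : (1 - X ^ n : ℤ[X]) ≠ 0 := one_sub_X_pow_ne_zero hn
  have hdeg (n : ℕ) : (1 - X ^ n : ℤ[X]).natDegree = n := by
    rw [natDegree_sub]
    exact natDegree_X_pow_sub_C
  have h : (f * ((1 - X ^ p) * (1 - X ^ q))).natDegree =
      ((1 - X ^ 1) * (1 - X ^ (p * q)) : ℤ[X]).natDegree := by
    rw [hf.mul_eq, pow_one]
  rw [natDegree_mul hf.ne_zero (mul_ne_zero (hne (by lia)) (hne (by lia))),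
    natDegree_mul (hne (by lia)) (hne (by lia)),
    natDegree_mul (hne one_pos) (hne (by positivity)), hdeg, hdeg, hdeg, hdeg] at h
  lia

theorem coe_mul_floorSeries_eq_one :
    (f : PowerSeries ℤ) *
      ((1 - PowerSeries.X ^ p) * (1 - PowerSeries.X ^ q) * floorSeries (p * q)) = 1 := by
  have hmul := congrArg (fun P : ℤ[X] => (P : PowerSeries ℤ)) hf.mul_eq
  push_cast at hmul
  rw [← mul_assoc, hmul, one_sub_mul_floorSeries (mul_pos hf.left_pos hf.right_pos)]

theorem coeff_mul_floorSeries (i : ℕ) :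
    PowerSeries.coeff i
        ((1 - PowerSeries.X ^ p) * (1 - PowerSeries.X ^ q) * floorSeries (p * q)) =
      Δ_[(p : ℤ)] (Δ_[(q : ℤ)] (· / (p * q : ℤ))) (i - p - q) := by
  have hp := hf.one_lt_left
  have hq := hf.one_lt_right
  have hle : p + q ≤ p * q := by nlinarith
  have hexp : (1 - PowerSeries.X ^ p) * (1 - PowerSeries.X ^ q) * floorSeries (p * q) =
      PowerSeries.X ^ 0 * floorSeries (p * q) - PowerSeries.X ^ p * floorSeries (p * q) -
        PowerSeries.X ^ q * floorSeries (p * q) +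
          PowerSeries.X ^ (p + q) * floorSeries (p * q) := by ring
  have hcoeff {a : ℕ} (ha : a ≤ p * q) := coeff_X_pow_mul_floorSeries (by lia) ha i
  rw [hexp, map_add, map_sub, map_sub, hcoeff (by lia), hcoeff (by lia), hcoeff (by lia),
    hcoeff hle]
  simp only [fwdDiff]
  push_cast
  ring_nf

theorem coeff_eq_fwdDiff_fwdDiff_floorSum {F : ℤ[X]} {r : ℕ} (hr : 0 < r)
    (hF : F * f = expand ℤ r f) (n : ℕ) :
    F.coeff n =
      Δ_[(p : ℤ)] (Δ_[(q : ℤ)] (floorSum f.coeff (p * q) (n / r) r)) (n - p - q) := by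
  have hF' : (F : PowerSeries ℤ) = (expand ℤ r f : PowerSeries ℤ) *
      ((1 - PowerSeries.X ^ p) * (1 - PowerSeries.X ^ q) * floorSeries (p * q)) := by
    rw [← hF, Polynomial.coe_mul, mul_assoc, hf.coe_mul_floorSeries_eq_one, mul_one]
  rw [← coeff_coe, hF', coeff_expand_mul_powerSeries _ _ hr]
  simp only [fwdDiff, floorSum, ← sum_sub_distrib, ← mul_sub]
  refine sum_congr rfl fun j hj => ?_
  have hj' : r * j ≤ n := by
    rw [mul_comm, ← Nat.le_div_iff_mul_le hr]
    exact Nat.lt_succ_iff.mp (mem_range.mp hj)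
  rw [hf.coeff_mul_floorSeries]
  simp only [fwdDiff]
  push_cast [hj']
  ring_nf

theorem abs_coeff_le {F : ℤ[X]} {r : ℕ} {w : ℤ} (hF : F * f = expand ℤ r f)
    (hr_pos : 0 < r) (hr : r.Coprime (p * q)) (hrw : r ≡ w [ZMOD p * q]) (n : ℕ) :
    |F.coeff n| ≤ w.natAbs := by
  rcases lt_or_ge F.natDegree n with hn | hn
  · simp [coeff_eq_zero_of_natDegree_lt hn]
  have hn_lt : n < p * q * r := calc
    n ≤ F.natDegree := hn
    _ ≤ (expand ℤ r f).natDegree :=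
      natDegree_le_of_dvd (Dvd.intro f hF) ((expand_ne_zero hr_pos).mpr hf.ne_zero)
    _ = f.natDegree * r := natDegree_expand r f
    _ < p * q * r := Nat.mul_lt_mul_of_pos_right hf.natDegree_lt hr_pos
  rw [hf.coeff_eq_fwdDiff_fwdDiff_floorSum hr_pos hF]
  refine hf.abs_fwdDiff_fwdDiff_floorSum_le ((Nat.div_lt_iff_lt_mul hr_pos).mpr hn_lt) hrw ?_ _
  exact_mod_cast Nat.isCoprime_iff_coprime.mpr hr

end IsInclusionExclusion

theorem cyclotomic_pqr_height_le (p q r : ℕ)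
    (hp : p.Prime) (hq : q.Prime) (hr : r.Prime)
    (hpq : p ≠ q) (hpr : p ≠ r) (hqr : q ≠ r)
    (w : ℤ) (hmod : (r : ℤ) ≡ w [ZMOD ((p * q : ℕ) : ℤ)]) :
    cyclotomicHeight (p * q * r) ≤ w.natAbs := by
  have hcop : r.Coprime (p * q) :=
    ((Nat.coprime_primes hr hp).mpr hpr.symm).mul_right ((Nat.coprime_primes hr hq).mpr hqr.symm)
  have hexpand := (cyclotomic_expand_eq_cyclotomic_mul hr (hr.coprime_iff_not_dvd.mp hcop) ℤ).symm
  rw [Nat.cast_mul] at hmod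
  refine Finset.sup_le fun n _ => ?_
  have h := (isInclusionExclusion_cyclotomic hp hq hpq).abs_coeff_le hexpand hr.pos hcop hmod n
  rwa [Int.abs_eq_natAbs, Nat.cast_le] at h
end

section
/- Let p < q < r be odd primes such that r ≡ 2 (mod pq) or r ≡ −2 (mod pq), and suppose q ≢ 1 (mod p). Then A(pqr) = 2. -/
/-!
Write `Φ_pq` for the binary polynomial `(x - 1)(x^{pq} - 1) / ((x^p - 1)(x^q - 1))`. Then
`Φ_pqr(x) = Φ_pq(x^r) / Φ_pq(x)`, and `1 / Φ_pq` is a power series with `pq`-periodic coefficients,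
so every coefficient of `Φ_pqr` is a truncation of a sum which depends only on `r` modulo `pq`.
For `r ≡ 2` these sums are compared with their analogues for `Φ_pq(x^2) / Φ_pq(x) = Φ_pq(-x)`,
whose coefficients are at most `1` in absolute value: the two differ by a block sum of coefficients
of `Φ_pq`. Such block sums lie in `{-1, 0, 1}`, because the partial sums of the coefficients of
`Φ_pq` form the indicator function of the numerical semigroup `⟨p, q⟩`; hence the bound `2`. It is
attained as soon as `⟨p, q⟩` contains `M` and `2(M + h)` but neither `M + h` nor `2(M + h) - 1` for
some `0 < 2h < p`, and such `M` and `h` can be read off from the quotient and remainder of `q`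
modulo `p`. The case `r ≡ -2` is the mirror image of the case `r ≡ 2`, as `Φ_pq` is palindromic.
-/

open Polynomial
open scoped PowerSeries

section

theorem X_pow_sub_one_ne_zero {d : ℕ} (hd : d ≠ 0) : (X ^ d - 1 : ℤ[X]) ≠ 0 :=
  X_pow_sub_C_ne_zero (Nat.pos_of_ne_zero hd) 1

theorem reverse_X_pow_sub_one (d : ℕ) : (X ^ d - 1 : ℤ[X]).reverse = 1 - X ^ d := by
  have hX : (X ^ d : ℤ[X]).reverse = 1 := by
    rw [← one_mul (X ^ d), reverse_mul_X_pow, ← C_1, reverse_C]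
  have h := reverse_add_C (X ^ d : ℤ[X]) (-1)
  rw [hX, natDegree_X_pow] at h
  simpa [← sub_eq_add_neg] using h

/-- The binary inclusion–exclusion polynomial `(X - 1)(X ^ (p * q) - 1) / ((X ^ p - 1)(X ^ q - 1))`
of coprime `p` and `q`, which is `Φ_pq` when `p` and `q` are primes. It is encoded as the product of
the `Φ_d` with `d ∣ p * q` dividing neither `p` nor `q`, which avoids a division. -/
noncomputable def binaryPoly (p q : ℕ) : ℤ[X] :=
  ∏ d ∈ (p * q).divisors \ (p.divisors ∪ q.divisors), cyclotomic d ℤ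

variable {p q : ℕ}

theorem binaryPoly_mul (hp : p ≠ 0) (hq : q ≠ 0) (hcop : p.Coprime q) :
    binaryPoly p q * ((X ^ p - 1) * (X ^ q - 1)) = (X - 1) * (X ^ (p * q) - 1) := by
  have hprod {n : ℕ} (hn : n ≠ 0) : ∏ d ∈ n.divisors, cyclotomic d ℤ = X ^ n - 1 :=
    prod_cyclotomic_eq_X_pow_sub_one (Nat.pos_of_ne_zero hn) ℤ
  have hinter : p.divisors ∩ q.divisors = {1} := by
    ext d
    simp only [Finset.mem_inter, Nat.mem_divisors, Finset.mem_singleton]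
    refine ⟨fun h => Nat.eq_one_of_dvd_coprimes hcop h.1.1 h.2.1, ?_⟩
    rintro rfl
    simp [hp, hq]
  have hunion : p.divisors ∪ q.divisors ⊆ (p * q).divisors :=
    Finset.union_subset (Nat.divisors_subset_of_dvd (mul_ne_zero hp hq) (dvd_mul_right p q))
      (Nat.divisors_subset_of_dvd (mul_ne_zero hp hq) (dvd_mul_left q p))
  calc binaryPoly p q * ((X ^ p - 1) * (X ^ q - 1))
      = binaryPoly p q * ((∏ d ∈ p.divisors ∪ q.divisors, cyclotomic d ℤ) * (X - 1)) := by
        rw [← hprod hp, ← hprod hq, ← Finset.prod_union_inter, hinter, Finset.prod_singleton,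
          cyclotomic_one]
    _ = (X - 1) * (X ^ (p * q) - 1) := by
        rw [← mul_assoc, binaryPoly, Finset.prod_sdiff hunion, hprod (mul_ne_zero hp hq), mul_comm]

theorem reverse_binaryPoly (hp : p ≠ 0) (hq : q ≠ 0) (hcop : p.Coprime q) :
    (binaryPoly p q).reverse = binaryPoly p q := by
  have h := binaryPoly_mul hp hq hcop
  have hrev := congrArg reverse h
  have hX : (X - 1 : ℤ[X]).reverse = 1 - X := by simpa using reverse_X_pow_sub_one 1
  simp only [reverse_mul_of_domain, reverse_X_pow_sub_one, hX] at hrev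
  apply mul_right_cancel₀ (mul_ne_zero (X_pow_sub_one_ne_zero hp) (X_pow_sub_one_ne_zero hq))
  linear_combination hrev - h

theorem coeff_binaryPoly_natDegree_sub (hp : p ≠ 0) (hq : q ≠ 0) (hcop : p.Coprime q) {m : ℕ}
    (hm : m ≤ (binaryPoly p q).natDegree) :
    (binaryPoly p q).coeff ((binaryPoly p q).natDegree - m) = (binaryPoly p q).coeff m := by
  conv_rhs => rw [← reverse_binaryPoly hp hq hcop, coeff_reverse, revAt_le hm]

theorem expand_two_binaryPoly (hpo : Odd p) (hqo : Odd q) (hcop : p.Coprime q) :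
    expand ℤ 2 (binaryPoly p q) = (binaryPoly p q).comp (-X) * binaryPoly p q := by
  have h := binaryPoly_mul hpo.pos.ne' hqo.pos.ne' hcop
  have hneg := congrArg (fun f : ℤ[X] => f.comp (-X)) h
  have hsq := congrArg (expand ℤ 2) h
  simp only [mul_comp, sub_comp, pow_comp, X_comp, one_comp, hpo.neg_pow, hqo.neg_pow,
    (hpo.mul hqo).neg_pow] at hneg
  simp only [map_mul, map_sub, map_pow, expand_X, map_one, ← pow_mul, mul_comm 2] at hsq
  apply mul_right_cancel₀ (mul_ne_zero
    (X_pow_sub_one_ne_zero (mul_ne_zero hpo.pos.ne' two_ne_zero))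
    (X_pow_sub_one_ne_zero (mul_ne_zero hqo.pos.ne' two_ne_zero)))
  rw [hsq]
  simp only [pow_mul]
  linear_combination (-(1 + X) * (1 + X ^ (p * q))) * h -
    (binaryPoly p q * ((X ^ p - 1) * (X ^ q - 1))) * hneg

/-- `Q` is the ternary inclusion–exclusion polynomial of the pairwise coprime `p`, `q`, `r`, which
is `Φ_pqr` when they are primes; its defining quotient is encoded by cross-multiplication. -/
def IsTernaryPoly (p q r : ℕ) (Q : ℤ[X]) : Prop :=
  Q * ((X - 1) * (X ^ (p * q) - 1) * (X ^ (p * r) - 1) * (X ^ (q * r) - 1)) =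
    (X ^ p - 1) * (X ^ q - 1) * (X ^ r - 1) * (X ^ (p * q * r) - 1)

theorem IsTernaryPoly.expand_binaryPoly {r : ℕ} {Q : ℤ[X]} (hQ : IsTernaryPoly p q r Q)
    (hp : p ≠ 0) (hq : q ≠ 0) (hr : r ≠ 0) (hcop : p.Coprime q) :
    expand ℤ r (binaryPoly p q) = Q * binaryPoly p q := by
  have h := binaryPoly_mul hp hq hcop
  have hexp := congrArg (expand ℤ r) h
  simp only [map_mul, map_sub, map_pow, expand_X, map_one, ← pow_mul, mul_comm r] at hexp
  have hne {d : ℕ} (hd : d ≠ 0) : (X ^ d - 1 : ℤ[X]) ≠ 0 := X_pow_sub_one_ne_zero hd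
  rw [IsTernaryPoly] at hQ
  apply mul_right_cancel₀ (mul_ne_zero (mul_ne_zero (hne hp) (hne hq))
    (mul_ne_zero (hne (mul_ne_zero hp hr)) (hne (mul_ne_zero hq hr))))
  linear_combination ((X ^ p - 1) * (X ^ q - 1)) * hexp - hQ -
    Q * (X ^ (p * r) - 1) * (X ^ (q * r) - 1) * h

theorem isTernaryPoly_cyclotomic {r : ℕ} (hp : p.Prime) (hq : q.Prime) (hr : r.Prime)
    (hpq : p ≠ q) (hpr : p ≠ r) (hqr : q ≠ r) :
    IsTernaryPoly p q r (cyclotomic (p * q * r) ℤ) := by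
  have : Fact p.Prime := ⟨hp⟩
  have hdvd {a b : ℕ} (ha : a.Prime) (hb : b.Prime) (hab : a ≠ b) : ¬ b ∣ a := fun h =>
    hab ((Nat.prime_dvd_prime_iff_eq hb ha).1 h).symm
  have hP := cyclotomic_prime_mul_X_sub_one ℤ p
  have hPq := cyclotomic_expand_eq_cyclotomic_mul hq (hdvd hp hq hpq) ℤ
  have hPQr := cyclotomic_expand_eq_cyclotomic_mul hr
    (hr.dvd_mul.not.2 (not_or.2 ⟨hdvd hp hr hpr, hdvd hq hr hqr⟩)) ℤ
  have hexp (n : ℕ) : expand ℤ n (cyclotomic p ℤ) * (X ^ n - 1) = X ^ (p * n) - 1 := by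
    simpa [← pow_mul, mul_comm p] using congrArg (expand ℤ n) hP
  have hPqr_exp := congrArg (expand ℤ r) hPq
  rw [map_mul, hPQr, expand_expand, mul_comm r q] at hPqr_exp
  have hexp_qr : X ^ (p * q * r) - 1 =
      expand ℤ (q * r) (cyclotomic p ℤ) * (X ^ (q * r) - 1) := by rw [hexp, mul_assoc]
  rw [IsTernaryPoly, ← hexp q, ← hexp r, hexp_qr, ← hP]
  linear_combination (X - 1) * (X ^ q - 1) * (X ^ r - 1) * (X ^ (q * r) - 1) *
    (cyclotomic (p * q * r) ℤ * expand ℤ r (cyclotomic p ℤ) * hPq - cyclotomic p ℤ * hPqr_exp)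

/-! ### Partial sums of the coefficients and the semigroup `⟨p, q⟩` -/

theorem one_sub_X_pow_ne_zero_s19 {d : ℕ} (hd : d ≠ 0) : (1 - PowerSeries.X ^ d : ℤ⟦X⟧) ≠ 0 := by
  intro h
  simpa [zero_pow hd] using congrArg (PowerSeries.coeff 0) h

theorem coe_binaryPoly_mul (hp : p ≠ 0) (hq : q ≠ 0) (hcop : p.Coprime q) :
    (binaryPoly p q : ℤ⟦X⟧) * ((1 - PowerSeries.X ^ p) * (1 - PowerSeries.X ^ q)) =
      (1 - PowerSeries.X) * (1 - PowerSeries.X ^ (p * q)) := by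
  have h := congrArg (fun f : ℤ[X] => (f : ℤ⟦X⟧)) (binaryPoly_mul hp hq hcop)
  simp only [coe_mul, coe_sub, coe_one, coe_pow, coe_X] at h
  linear_combination h

/-- The numerical semigroup `⟨p, q⟩`. -/
abbrev pairSemigroup (p q : ℕ) : AddSubmonoid ℕ := AddSubmonoid.closure {p, q}

theorem mem_pairSemigroup {n : ℕ} : n ∈ pairSemigroup p q ↔ ∃ x y, x * p + y * q = n := by
  simp [AddSubmonoid.mem_closure_pair]

/-- The indicator function of the numerical semigroup `⟨p, q⟩`, with values in `ℤ`. -/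
noncomputable def pairIndicator (p q : ℕ) : ℕ → ℤ := (pairSemigroup p q : Set ℕ).indicator 1

theorem pairIndicator_of_mem {n : ℕ} (h : n ∈ pairSemigroup p q) : pairIndicator p q n = 1 :=
  Set.indicator_of_mem h 1

theorem pairIndicator_of_notMem {n : ℕ} (h : n ∉ pairSemigroup p q) : pairIndicator p q n = 0 :=
  Set.indicator_of_notMem h 1

theorem pairIndicator_eq_zero_or_one (n : ℕ) :
    pairIndicator p q n = 0 ∨ pairIndicator p q n = 1 :=
  Set.indicator_eq_zero_or_self _ 1 n

theorem add_mem_of_forall_lt_mul_ne (hq : q ≠ 0) {n : ℕ} (hn : n ∈ pairSemigroup p q)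
    (hne : ∀ y < p, y * q ≠ n) : ∃ k ∈ pairSemigroup p q, k + p = n := by
  obtain ⟨x, y, rfl⟩ := mem_pairSemigroup.1 hn
  rcases x with _ | x
  · obtain ⟨z, rfl⟩ : ∃ z, y = p + z := Nat.exists_eq_add_of_le <| not_lt.1 fun hy =>
      hne y hy (by ring)
    obtain ⟨w, rfl⟩ := Nat.exists_eq_succ_of_ne_zero hq
    exact ⟨_, mem_pairSemigroup.2 ⟨w, z, rfl⟩, by rw [Nat.succ_eq_add_one]; ring⟩
  · exact ⟨_, mem_pairSemigroup.2 ⟨x, y, rfl⟩, by ring⟩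

theorem mul_ne_add_of_lt (hcop : p.Coprime q) {y k : ℕ} (hy : y < p) (hk : k ∈ pairSemigroup p q) :
    y * q ≠ k + p := by
  obtain ⟨x, z, rfl⟩ := mem_pairSemigroup.1 hk
  intro h
  have hzy : z < y := by
    by_contra! hyz
    have := Nat.mul_le_mul_right q hyz
    omega
  obtain ⟨w, rfl⟩ := Nat.exists_eq_add_of_lt hzy
  have hdvd : p ∣ (w + 1) * q := ⟨x + 1, by linarith⟩
  have := Nat.le_of_dvd w.succ_pos (hcop.dvd_of_dvd_mul_right hdvd)
  omega

theorem mk_pairIndicator_mul (hq : q ≠ 0) (hcop : p.Coprime q) :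
    PowerSeries.mk (pairIndicator p q) * (1 - PowerSeries.X ^ p) =
      ∑ y ∈ Finset.range p, (PowerSeries.X ^ q) ^ y := by
  ext n
  simp only [mul_sub, mul_one, map_sub, map_sum, PowerSeries.coeff_mul_X_pow', PowerSeries.coeff_mk,
    ← pow_mul, PowerSeries.coeff_X_pow]
  by_cases hn : ∃ y < p, y * q = n
  · obtain ⟨y, hy, rfl⟩ := hn
    have hmem : y * q ∈ pairSemigroup p q := mem_pairSemigroup.2 ⟨0, y, by ring⟩
    have hsub (h : p ≤ y * q) : pairIndicator p q (y * q - p) = 0 :=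
      pairIndicator_of_notMem fun hk => mul_ne_add_of_lt hcop hy hk (Nat.sub_add_cancel h).symm
    rw [pairIndicator_of_mem hmem, ite_eq_right_iff.2 hsub, sub_zero, mul_comm y]
    simp [hq, hy]
  · push Not at hn
    rw [Finset.sum_eq_zero fun y hy =>
      if_neg fun h => hn y (Finset.mem_range.1 hy) (by rw [h, mul_comm])]
    by_cases hmem : n ∈ pairSemigroup p q
    · obtain ⟨k, hk, rfl⟩ := add_mem_of_forall_lt_mul_ne hq hmem hn
      simp [pairIndicator_of_mem, hmem, hk]
    · have hsub (h : p ≤ n) : pairIndicator p q (n - p) = 0 := pairIndicator_of_notMem fun hk =>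
        hmem (Nat.sub_add_cancel h ▸ add_mem hk (AddSubmonoid.subset_closure (by simp)))
      rw [pairIndicator_of_notMem hmem, ite_eq_right_iff.2 hsub, sub_zero]

theorem coe_binaryPoly (hp : p ≠ 0) (hq : q ≠ 0) (hcop : p.Coprime q) :
    (binaryPoly p q : ℤ⟦X⟧) = PowerSeries.mk (pairIndicator p q) * (1 - PowerSeries.X) := by
  apply mul_right_cancel₀ (mul_ne_zero (one_sub_X_pow_ne_zero_s19 hp) (one_sub_X_pow_ne_zero_s19 hq))
  have hgeom := geom_sum_mul_neg (PowerSeries.X ^ q : ℤ⟦X⟧) p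
  rw [← mk_pairIndicator_mul hq hcop, ← pow_mul, mul_comm q] at hgeom
  linear_combination coe_binaryPoly_mul hp hq hcop - (1 - PowerSeries.X) * hgeom

theorem sum_range_succ_coeff_binaryPoly (hp : p ≠ 0) (hq : q ≠ 0) (hcop : p.Coprime q) (n : ℕ) :
    ∑ m ∈ Finset.range (n + 1), (binaryPoly p q).coeff m = pairIndicator p q n := by
  have hcoeff (m : ℕ) := congrArg (PowerSeries.coeff m) (coe_binaryPoly hp hq hcop)
  simp only [coeff_coe, mul_sub, mul_one, map_sub, PowerSeries.coeff_mk] at hcoeff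
  induction n with
  | zero => simp [hcoeff]
  | succ n ih =>
    rw [Finset.sum_range_succ, ih, hcoeff, PowerSeries.coeff_succ_mul_X, PowerSeries.coeff_mk,
      add_sub_cancel]

theorem sum_range_coeff_binaryPoly_eq_zero_or_one (hp : p ≠ 0) (hq : q ≠ 0)
    (hcop : p.Coprime q) (n : ℕ) :
    ∑ m ∈ Finset.range n, (binaryPoly p q).coeff m = 0 ∨
      ∑ m ∈ Finset.range n, (binaryPoly p q).coeff m = 1 := by
  cases n with
  | zero => simp
  | succ n => rw [sum_range_succ_coeff_binaryPoly hp hq hcop]; exact pairIndicator_eq_zero_or_one n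

theorem abs_sum_Ico_coeff_binaryPoly_le_one (hp : p ≠ 0) (hq : q ≠ 0) (hcop : p.Coprime q)
    (a b : ℕ) : |∑ m ∈ Finset.Ico a b, (binaryPoly p q).coeff m| ≤ 1 := by
  rcases le_total b a with hba | hab
  · simp [Finset.Ico_eq_empty_of_le hba]
  · rw [Finset.sum_Ico_eq_sub _ hab]
    rcases sum_range_coeff_binaryPoly_eq_zero_or_one hp hq hcop a with ha | ha <;>
      rcases sum_range_coeff_binaryPoly_eq_zero_or_one hp hq hcop b with hb | hb <;>
      simp [ha, hb]

theorem abs_coeff_binaryPoly_le_one (hp : p ≠ 0) (hq : q ≠ 0) (hcop : p.Coprime q) (n : ℕ) :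
    |(binaryPoly p q).coeff n| ≤ 1 := by
  simpa using abs_sum_Ico_coeff_binaryPoly_le_one hp hq hcop n (n + 1)

theorem coeff_binaryPoly_eq_one (hp : p ≠ 0) (hq : q ≠ 0) (hcop : p.Coprime q) {n : ℕ}
    (h : n ∉ pairSemigroup p q) (h' : n + 1 ∈ pairSemigroup p q) :
    (binaryPoly p q).coeff (n + 1) = 1 := by
  have hsum := sum_range_succ_coeff_binaryPoly hp hq hcop (n + 1)
  rwa [Finset.sum_range_succ, sum_range_succ_coeff_binaryPoly hp hq hcop,
    pairIndicator_of_notMem h, pairIndicator_of_mem h', zero_add] at hsum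

/-! ### The inverse power series and truncated sums -/

/-- The coefficients of the power series
`1 / binaryPoly p q = (1 + X + ⋯ + X ^ (p - 1)) (1 - X ^ q) / (1 - X ^ (p * q))`, extended
`p * q`-periodically to negative indices. -/
def invCoeff (p q : ℕ) (j : ℤ) : ℤ :=
  (if j % (p * q : ℕ) < p then 1 else 0) -
    if (q : ℤ) ≤ j % (p * q : ℕ) ∧ j % (p * q : ℕ) < p + q then 1 else 0

theorem invCoeff_congr {i j : ℤ} (h : i ≡ j [ZMOD (p * q : ℕ)]) :
    invCoeff p q i = invCoeff p q j := by
  rw [invCoeff, invCoeff, h.eq]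

theorem invCoeff_of_lt_mul {j : ℤ} (h0 : 0 ≤ j) (hj : j < (p * q : ℕ)) :
    invCoeff p q j =
      (if j < p then 1 else 0) - if (q : ℤ) ≤ j ∧ j < p + q then 1 else 0 := by
  rw [invCoeff, Int.emod_eq_of_lt h0 hj]

theorem invCoeff_of_lt (hpq : p ≤ q) {j : ℤ} (h0 : 0 ≤ j) (hj : j < p) : invCoeff p q j = 1 := by
  have hle : p ≤ p * q := Nat.le_mul_of_pos_right p (by omega)
  rw [invCoeff_of_lt_mul h0 (by omega), if_pos hj, if_neg (by omega), sub_zero]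

theorem mk_invCoeff_mul_one_sub (hp : 1 < p) (hq : 1 < q) :
    PowerSeries.mk (fun n : ℕ => invCoeff p q n) * (1 - PowerSeries.X ^ (p * q)) =
      (∑ i ∈ Finset.range p, PowerSeries.X ^ i) * (1 - PowerSeries.X ^ q) := by
  have hle : p + q ≤ p * q := by nlinarith
  have hgeom (n : ℕ) : PowerSeries.coeff n (∑ i ∈ Finset.range p, PowerSeries.X ^ i : ℤ⟦X⟧) =
      if n < p then 1 else 0 := by
    simp [PowerSeries.coeff_X_pow]
  ext n
  simp only [mul_sub, mul_one, map_sub, PowerSeries.coeff_mul_X_pow', PowerSeries.coeff_mk, hgeom]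
  by_cases hn : p * q ≤ n
  · have hper : invCoeff p q (n - p * q : ℕ) = invCoeff p q n := by
      rw [Nat.cast_sub hn]
      exact invCoeff_congr (Int.sub_emod_right _ _)
    rw [if_pos hn, hper, sub_self]
    split_ifs <;> omega
  · rw [if_neg hn, invCoeff_of_lt_mul (by omega) (by omega)]
    split_ifs <;> omega

theorem mk_invCoeff_mul_binaryPoly (hp : 1 < p) (hq : 1 < q) (hcop : p.Coprime q) :
    PowerSeries.mk (fun n : ℕ => invCoeff p q n) * (binaryPoly p q : ℤ⟦X⟧) = 1 := by
  have hgeom := geom_sum_mul_neg (PowerSeries.X : ℤ⟦X⟧) p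
  have hne : (1 - PowerSeries.X : ℤ⟦X⟧) ≠ 0 := by
    simpa using one_sub_X_pow_ne_zero_s19 one_ne_zero
  have hne_pq : (1 - PowerSeries.X ^ (p * q) : ℤ⟦X⟧) ≠ 0 :=
    one_sub_X_pow_ne_zero_s19 (mul_ne_zero (by omega) (by omega))
  apply mul_right_cancel₀ (mul_ne_zero hne hne_pq)
  linear_combination coe_binaryPoly_mul (by omega) (by omega) hcop +
    (binaryPoly p q : ℤ⟦X⟧) * (1 - PowerSeries.X) * mk_invCoeff_mul_one_sub hp hq +
    (binaryPoly p q : ℤ⟦X⟧) * (1 - PowerSeries.X ^ q) * hgeom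

/-- The first `L` terms of the sum that gives the coefficient of `X ^ N` in
`binaryPoly p q (X ^ s) / binaryPoly p q`. By periodicity of `invCoeff`, the truncated sum makes
sense for arbitrary integers `s` and `N`, and depends only on their classes modulo `p * q`. -/
noncomputable def twistedSum (p q : ℕ) (s : ℤ) (L : ℕ) (N : ℤ) : ℤ :=
  ∑ m ∈ Finset.range L, (binaryPoly p q).coeff m * invCoeff p q (N - s * m)

theorem twistedSum_congr {s s' N N' : ℤ} (L : ℕ) (hs : s ≡ s' [ZMOD (p * q : ℕ)])
    (hN : N ≡ N' [ZMOD (p * q : ℕ)]) : twistedSum p q s L N = twistedSum p q s' L N' :=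
  Finset.sum_congr rfl fun m _ => by rw [invCoeff_congr (hN.sub (hs.mul_right m))]

theorem twistedSum_add_sum_Ico (s N : ℤ) {K L : ℕ} (h : K ≤ L) :
    twistedSum p q s K N + ∑ m ∈ Finset.Ico K L,
      (binaryPoly p q).coeff m * invCoeff p q (N - s * m) = twistedSum p q s L N :=
  Finset.sum_range_add_sum_Ico _ h

theorem twistedSum_of_natDegree_lt (s N : ℤ) {L : ℕ} (hL : (binaryPoly p q).natDegree < L) :
    twistedSum p q s L N = twistedSum p q s ((binaryPoly p q).natDegree + 1) N :=
  Finset.eventually_constant_sum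
    (fun m hm => by rw [coeff_eq_zero_of_natDegree_lt (Nat.lt_of_succ_le hm), zero_mul]) hL

section

variable {s : ℕ} {Q : ℤ[X]}

theorem coeff_eq_twistedSum (hp : 1 < p) (hq : 1 < q) (hcop : p.Coprime q) (hs : s ≠ 0)
    (hQ : expand ℤ s (binaryPoly p q) = Q * binaryPoly p q) (n : ℕ) :
    Q.coeff n = twistedSum p q s (n / s + 1) n := by
  have hs0 := Nat.pos_of_ne_zero hs
  have hseries : (Q : ℤ⟦X⟧) = (expand ℤ s (binaryPoly p q) : ℤ[X]) *
      PowerSeries.mk (fun n : ℕ => invCoeff p q n) := by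
    rw [hQ, coe_mul, mul_assoc, mul_comm (binaryPoly p q : ℤ⟦X⟧),
      mk_invCoeff_mul_binaryPoly hp hq hcop, mul_one]
  rw [← coeff_coe, hseries, PowerSeries.coeff_mul, Finset.Nat.sum_antidiagonal_eq_sum_range_succ_mk]
  symm
  refine Finset.sum_of_injOn (s * ·) (mul_right_injective₀ hs).injOn ?_ ?_ ?_
  · intro m hm
    have hmn := (Nat.le_div_iff_mul_le hs0).1 (Finset.mem_range_succ_iff.1 hm)
    exact Finset.mem_coe.2 (Finset.mem_range_succ_iff.2 ((mul_comm s m).trans_le hmn))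
  · intro k hk hk'
    rw [coeff_coe, coeff_expand hs0, if_neg, zero_mul]
    rintro ⟨m, rfl⟩
    refine hk' ⟨m, ?_, rfl⟩
    rw [Finset.mem_coe, Finset.mem_range_succ_iff, Nat.le_div_iff_mul_le hs0, mul_comm]
    exact Finset.mem_range_succ_iff.1 hk
  · intro m hm
    have hmn := (Nat.le_div_iff_mul_le hs0).1 (Finset.mem_range_succ_iff.1 hm)
    rw [coeff_coe, coeff_expand_mul' hs0, PowerSeries.coeff_mk, Nat.cast_sub (by rwa [mul_comm]),
      Nat.cast_mul]

theorem twistedSum_natDegree_add_one (hp : 1 < p) (hq : 1 < q) (hcop : p.Coprime q) (hs : s ≠ 0)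
    (hQ : expand ℤ s (binaryPoly p q) = Q * binaryPoly p q) (N : ℤ) :
    twistedSum p q s ((binaryPoly p q).natDegree + 1) N = 0 := by
  -- Shifting `N` by a multiple of `p * q` turns the sum into a coefficient of `Q` past its degree.
  set d := (binaryPoly p q).natDegree
  obtain ⟨t, -, ht⟩ := Int.existsUnique_equiv_nat (N - (s * (d + 1) + Q.natDegree + 1 : ℕ))
    (b := (p * q : ℕ)) (by positivity)
  set n := s * (d + 1) + Q.natDegree + 1 + t with hn
  have hNn : N ≡ n [ZMOD (p * q : ℕ)] := by
    simpa [hn] using (ht.add_left (s * (d + 1) + Q.natDegree + 1 : ℕ)).symm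
  have hdn : d + 1 ≤ n / s :=
    (Nat.le_div_iff_mul_le (Nat.pos_of_ne_zero hs)).2 (by rw [mul_comm]; omega)
  calc twistedSum p q s (d + 1) N
      = twistedSum p q s (n / s + 1) n := by
        rw [twistedSum_congr _ rfl hNn, twistedSum_of_natDegree_lt _ _ (L := n / s + 1) (by omega)]
    _ = Q.coeff n := (coeff_eq_twistedSum hp hq hcop hs hQ n).symm
    _ = 0 := coeff_eq_zero_of_natDegree_lt (by omega)

theorem twistedSum_neg (hp : 1 < p) (hq : 1 < q) (hcop : p.Coprime q) (hs : s ≠ 0)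
    (hQ : expand ℤ s (binaryPoly p q) = Q * binaryPoly p q) (L : ℕ) (N : ℤ) :
    twistedSum p q (-s) L N = -twistedSum p q s ((binaryPoly p q).natDegree + 1 - L)
      (N + s * (binaryPoly p q).natDegree) := by
  set d := (binaryPoly p q).natDegree
  have hreflect {L : ℕ} : ∑ m ∈ Finset.Ico L (d + 1),
      (binaryPoly p q).coeff m * invCoeff p q (N - -s * m) =
      twistedSum p q s (d + 1 - L) (N + s * d) := by
    have h := Finset.sum_Ico_reflect (fun j : ℕ => (binaryPoly p q).coeff j *
      invCoeff p q (N + s * d - s * j)) L (le_refl (d + 1))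
    rw [Nat.sub_self, ← Finset.range_eq_Ico] at h
    rw [twistedSum, ← h]
    refine Finset.sum_congr rfl fun m hm => ?_
    have hmd : m ≤ d := Nat.lt_succ_iff.1 (Finset.mem_Ico.1 hm).2
    rw [coeff_binaryPoly_natDegree_sub (by omega) (by omega) hcop hmd, Nat.cast_sub hmd]
    congr 2
    ring
  have hfull : twistedSum p q (-s) (d + 1) N = 0 := by
    rw [← twistedSum_natDegree_add_one hp hq hcop hs hQ (N + s * d), twistedSum,
      Finset.range_eq_Ico, hreflect, Nat.sub_zero]
  rcases le_or_gt L (d + 1) with hL | hL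
  · rw [eq_neg_iff_add_eq_zero, ← hreflect, twistedSum_add_sum_Ico _ _ hL, hfull]
  · rw [twistedSum_of_natDegree_lt _ _ (by omega), hfull, Nat.sub_eq_zero_of_le hL.le, twistedSum,
      Finset.sum_range_zero, neg_zero]

end

theorem coeff_mul_add_eq_twistedSum (hp : 1 < p) (hq : 1 < q) (hcop : p.Coprime q) {r : ℕ} {s : ℤ}
    (hmod : r ≡ s [ZMOD (p * q : ℕ)]) {Q : ℤ[X]}
    (hQ : expand ℤ r (binaryPoly p q) = Q * binaryPoly p q) {t : ℕ} (ht : t < r) (l : ℕ) :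
    Q.coeff (r * l + t) = twistedSum p q s (l + 1) (s * l + t) := by
  have hr : 0 < r := by omega
  rw [coeff_eq_twistedSum hp hq hcop hr.ne' hQ, Nat.mul_add_div hr, Nat.div_eq_of_lt ht, add_zero]
  exact twistedSum_congr _ hmod (by push_cast; exact (hmod.mul_right _).add_right _)

/-! ### The upper bound -/

theorem twistedSum_two_half (hpo : Odd p) (hqo : Odd q) (hp : 1 < p) (hq : 1 < q)
    (hcop : p.Coprime q) (n : ℕ) :
    twistedSum p q 2 (n / 2 + 1) n = (binaryPoly p q).coeff n * (-1) ^ n := by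
  rw [← Nat.cast_two, ← coeff_eq_twistedSum hp hq hcop two_ne_zero
    (expand_two_binaryPoly hpo hqo hcop), ← comp_C_mul_X_coeff, C_neg, C_1, neg_one_mul]

theorem abs_twistedSum_two_half_le_one (hpo : Odd p) (hqo : Odd q) (hp : 1 < p) (hq : 1 < q)
    (hcop : p.Coprime q) (n : ℕ) : |twistedSum p q 2 (n / 2 + 1) n| ≤ 1 := by
  rw [twistedSum_two_half hpo hqo hp hq hcop, abs_mul, abs_neg_one_pow, mul_one]
  exact abs_coeff_binaryPoly_le_one (by omega) (by omega) hcop n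

theorem twistedSum_two_add_sum_Ico_coeff (hpq : p ≤ q) {M n : ℕ} (hMn : 2 * M ≤ n)
    (hn : n < 2 * M + 2 + p) :
    twistedSum p q 2 (M + 1) n + ∑ m ∈ Finset.Ico (M + 1) (n / 2 + 1), (binaryPoly p q).coeff m =
      twistedSum p q 2 (n / 2 + 1) n := by
  rw [← twistedSum_add_sum_Ico 2 n (show M + 1 ≤ n / 2 + 1 by omega)]
  congr 1
  refine Finset.sum_congr rfl fun m hm => ?_
  have hmem := Finset.mem_Ico.1 hm
  rw [invCoeff_of_lt hpq (by omega) (by omega), mul_one]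

theorem abs_sum_Ico_mul_invCoeff_le_one (hp : p ≠ 0) (hq : q ≠ 0) (hcop : p.Coprime q)
    {A B n : ℕ} (hA : n < 2 * A + p * q) (hB : 2 * B + p ≤ n + 2) :
    |∑ m ∈ Finset.Ico A B, (binaryPoly p q).coeff m * invCoeff p q (n - 2 * m)| ≤ 1 := by
  have hterm (m : ℕ) (hm : m ∈ Finset.Ico A B) :
      (binaryPoly p q).coeff m * invCoeff p q (n - 2 * m) =
        -if q + 2 * m ≤ n ∧ n < p + q + 2 * m then (binaryPoly p q).coeff m else 0 := by
    have hmem := Finset.mem_Ico.1 hm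
    rw [invCoeff_of_lt_mul (by omega) (by omega), if_neg (by omega)]
    split_ifs <;> omega
  have hwindow : {m ∈ Finset.Ico A B | q + 2 * m ≤ n ∧ n < p + q + 2 * m} =
      Finset.Ico (max A ((n + 2 - (p + q)) / 2)) (min B ((n + 2 - q) / 2)) := by
    ext m
    simp only [Finset.mem_filter, Finset.mem_Ico]
    omega
  rw [Finset.sum_congr rfl hterm, Finset.sum_neg_distrib, abs_neg, ← Finset.sum_filter, hwindow]
  exact abs_sum_Ico_coeff_binaryPoly_le_one hp hq hcop _ _

theorem abs_twistedSum_two_le_two (hpo : Odd p) (hqo : Odd q) (hp : 1 < p) (hpq : p < q)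
    (hcop : p.Coprime q) (L : ℕ) (N : ℤ) : |twistedSum p q 2 L N| ≤ 2 := by
  have hq := hp.trans hpq
  have hhalf := abs_twistedSum_two_half_le_one hpo hqo hp hq hcop
  obtain _ | M := L
  · simp [twistedSum]
  obtain ⟨t, ht, htN⟩ := Int.existsUnique_equiv_nat (N - (2 * M : ℕ)) (b := (p * q : ℕ))
    (by positivity)
  obtain ⟨n, hn⟩ : ∃ n, n = 2 * M + t := ⟨_, rfl⟩
  have hNn : N ≡ n [ZMOD (p * q : ℕ)] := by simpa [hn] using (htN.add_left (2 * M : ℕ)).symm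
  rw [twistedSum_congr _ rfl hNn]
  rcases lt_or_ge t p with htp | hpt
  · rw [eq_sub_of_add_eq (twistedSum_two_add_sum_Ico_coeff hpq.le (by omega) (by omega))]
    exact (abs_sub _ _).trans (add_le_add (hhalf n)
      (abs_sum_Ico_coeff_binaryPoly_le_one (by omega) (by omega) hcop _ _))
  -- For `p * q ≤ n` the terms up to index `(n - p * q) / 2` are, by periodicity, the whole sum that
  -- belongs to `n - p * q`; in the remaining terms `invCoeff` only takes the values `0` and `-1`.
  · obtain ⟨B, hBM, hB, hBsum⟩ :
        ∃ B ≤ M + 1, n < 2 * B + p * q ∧ |twistedSum p q 2 B n| ≤ 1 := by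
      rcases lt_or_ge n (p * q) with hlt | hge
      · exact ⟨0, by omega, by omega, by simp [twistedSum]⟩
      · refine ⟨(n - p * q) / 2 + 1, by omega, by omega, ?_⟩
        have hper : (n : ℤ) ≡ (n - p * q : ℕ) [ZMOD (p * q : ℕ)] := by
          rw [Nat.cast_sub hge]
          exact (Int.sub_emod_right _ _).symm
        rw [twistedSum_congr _ rfl hper]
        exact hhalf _
    rw [← twistedSum_add_sum_Ico 2 n hBM]
    exact (abs_add_le _ _).trans (add_le_add hBsum
      (abs_sum_Ico_mul_invCoeff_le_one (by omega) (by omega) hcop hB (by omega)))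

/-! ### A coefficient attaining the bound -/

/-- Memberships in the numerical semigroup `⟨p, q⟩` which force the truncated sum
`twistedSum p q 2 (M + 1) (2 * (M + h))` to be equal to `2`. -/
structure HeightWitness (p q M h : ℕ) : Prop where
  pos : 0 < h
  two_mul_lt : 2 * h < p
  mem : M ∈ pairSemigroup p q
  add_notMem : M + h ∉ pairSemigroup p q
  two_mul_add_mem : 2 * (M + h) ∈ pairSemigroup p q
  two_mul_add_sub_one_notMem : 2 * (M + h) - 1 ∉ pairSemigroup p q

theorem mul_add_ne_mul_add {b c : ℕ} (hbc : b < c) (hcb : c < b + p) (x a : ℕ) :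
    x * p + b ≠ a * p + c := by
  intro h
  rcases le_or_gt x a with hxa | hxa
  · have := Nat.mul_le_mul_right p hxa
    omega
  · have := Nat.mul_le_mul_right p (Nat.succ_le_of_lt hxa)
    rw [Nat.succ_mul] at this
    omega

theorem heightWitness_of_even {j h : ℕ} (hj : 0 < j) (hh : 0 < h) (hhp : 2 * h + 1 < p)
    (hq : q + 2 * h = (2 * j + 1) * p) : HeightWitness p q q h where
  pos := hh
  two_mul_lt := by omega
  mem := mem_pairSemigroup.2 ⟨0, 1, by ring⟩
  add_notMem := by
    rw [mem_pairSemigroup]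
    rintro ⟨x, y, hxy⟩
    have hpj : p ≤ j * p := Nat.le_mul_of_pos_left p hj
    have hy : y < 2 := by
      by_contra! hy
      nlinarith
    interval_cases y
    · have hx : (2 * j + 1) * p + 0 = x * p + h := by linarith
      exact mul_add_ne_mul_add hh (by omega) _ _ hx
    · have hx : x * p + 0 = 0 * p + h := by linarith
      exact mul_add_ne_mul_add hh (by omega) _ _ hx
  two_mul_add_mem := mem_pairSemigroup.2 ⟨2 * j + 1, 1, by linarith⟩
  two_mul_add_sub_one_notMem := by
    rw [mem_pairSemigroup]
    rintro ⟨x, y, hxy⟩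
    have hpj : p ≤ j * p := Nat.le_mul_of_pos_left p hj
    have hxy_succ : x * p + y * q + 1 = 2 * (q + h) := by omega
    have hy : y < 3 := by
      by_contra! hy
      nlinarith
    interval_cases y
    · have hx : (4 * j + 2) * p + 0 = x * p + (2 * h + 1) := by linarith
      exact mul_add_ne_mul_add (by omega) (by omega) _ _ hx
    · have hx : (2 * j + 1) * p + 0 = x * p + 1 := by linarith
      exact mul_add_ne_mul_add (by omega) (by omega) _ _ hx
    · have hx : x * p + 1 = 0 * p + 2 * h := by linarith
      exact mul_add_ne_mul_add (by omega) (by omega) _ _ hx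

theorem heightWitness_of_odd {j h : ℕ} (hh : 0 < h) (hhp : 2 * h < p)
    (hq : q = (2 * j + 1) * p + 2 * h) : HeightWitness p q ((j + 1) * p) h where
  pos := hh
  two_mul_lt := hhp
  mem := mem_pairSemigroup.2 ⟨j + 1, 0, by ring⟩
  add_notMem := by
    rw [mem_pairSemigroup]
    rintro ⟨x, y, hxy⟩
    obtain rfl : y = 0 := by
      by_contra! hy
      nlinarith [Nat.pos_of_ne_zero hy]
    have hx : x * p + 0 = (j + 1) * p + h := by linarith
    exact mul_add_ne_mul_add hh (by omega) _ _ hx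
  two_mul_add_mem := mem_pairSemigroup.2 ⟨1, 1, by linarith⟩
  two_mul_add_sub_one_notMem := by
    rw [mem_pairSemigroup]
    rintro ⟨x, y, hxy⟩
    have hpq : 2 * ((j + 1) * p + h) = p + q := by linarith
    have hxy_succ : x * p + y * q + 1 = p + q := by omega
    have hy : y < 2 := by
      by_contra! hy
      nlinarith
    interval_cases y
    · have hx : x * p + 1 = (2 * j + 2) * p + 2 * h := by linarith
      exact mul_add_ne_mul_add (by omega) (by omega) _ _ hx
    · have hx : 1 * p + 0 = x * p + 1 := by linarith
      exact mul_add_ne_mul_add (by omega) (by omega) _ _ hx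

theorem exists_heightWitness (hpo : Odd p) (hqo : Odd q) (hp : 1 < p) (hpq : p < q)
    (hcop : p.Coprime q) (hq1 : ¬ q ≡ 1 [MOD p]) : ∃ M h, HeightWitness p q M h := by
  have hs0 : q % p ≠ 0 := fun h => hp.ne' (Nat.eq_one_of_dvd_coprimes hcop dvd_rfl
    (Nat.dvd_of_mod_eq_zero h))
  have hs1 : q % p ≠ 1 := fun h => hq1 (h.trans (Nat.mod_eq_of_lt hp).symm)
  have hsp : q % p < p := Nat.mod_lt q (by omega)
  have hdiv : q / p * p + q % p = q := Nat.div_add_mod' q p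
  have hk : 0 < q / p := Nat.div_pos hpq.le (by omega)
  have hparity : Odd (q / p * p) ↔ Even (q % p) := by rwa [← Nat.odd_add, hdiv]
  rw [Nat.odd_mul, and_iff_left hpo] at hparity
  rcases Nat.even_or_odd' (q / p) with ⟨j, hj | hj⟩
  · have hs : Odd (q % p) := by
      rw [← Nat.not_even_iff_odd, ← hparity, hj]
      simp
    obtain ⟨h, hh⟩ := Nat.Odd.sub_odd hpo hs
    rw [hj] at hdiv
    exact ⟨q, h, heightWitness_of_even (j := j) (by omega) (by omega) (by omega)
      (by linarith [show q % p + 2 * h = p by omega])⟩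
  · obtain ⟨h, hh⟩ := hparity.1 (hj ▸ odd_two_mul_add_one j)
    rw [hj] at hdiv
    exact ⟨_, h, heightWitness_of_odd (j := j) (by omega) (by omega) (by linarith)⟩

theorem HeightWitness.coeff_eq_one {M h : ℕ} (hw : HeightWitness p q M h) (hq : q ≠ 0)
    (hcop : p.Coprime q) : (binaryPoly p q).coeff (2 * (M + h)) = 1 := by
  have hpos := hw.pos
  have hlt := hw.two_mul_lt
  have hsucc : 2 * (M + h) - 1 + 1 = 2 * (M + h) := by omega
  rw [← hsucc]
  exact coeff_binaryPoly_eq_one (by omega) hq hcop hw.two_mul_add_sub_one_notMem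
    (hsucc ▸ hw.two_mul_add_mem)

theorem HeightWitness.twistedSum_eq_two {M h : ℕ} (hw : HeightWitness p q M h) (hpo : Odd p)
    (hqo : Odd q) (hpq : p < q) (hcop : p.Coprime q) :
    twistedSum p q 2 (M + 1) (2 * (M + h) : ℕ) = 2 := by
  have hpos := hw.pos
  have hlt := hw.two_mul_lt
  have htail : ∑ m ∈ Finset.Ico (M + 1) (M + h + 1), (binaryPoly p q).coeff m = -1 := by
    have hpartial := sum_range_succ_coeff_binaryPoly (p := p) (q := q) (by omega) (by omega) hcop
    rw [Finset.sum_Ico_eq_sub _ (by omega), hpartial, hpartial,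
      pairIndicator_of_notMem hw.add_notMem, pairIndicator_of_mem hw.mem, zero_sub]
  have hsum := twistedSum_two_add_sum_Ico_coeff (M := M) (n := 2 * (M + h)) hpq.le
    (by omega) (by omega)
  rw [twistedSum_two_half hpo hqo (by omega) (by omega) hcop, Nat.mul_div_cancel_left _ two_pos,
    htail, hw.coeff_eq_one (by omega) hcop, pow_mul, neg_one_sq, one_pow] at hsum
  linarith

section

variable {r : ℕ} {Q : ℤ[X]}

theorem abs_coeff_le_two (hpo : Odd p) (hqo : Odd q) (hp : 1 < p) (hpq : p < q)
    (hcop : p.Coprime q) (hr : r ≠ 0)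
    (hmod : (r : ℤ) ≡ 2 [ZMOD ((p * q : ℕ) : ℤ)] ∨ (r : ℤ) ≡ -2 [ZMOD ((p * q : ℕ) : ℤ)])
    (hQ : expand ℤ r (binaryPoly p q) = Q * binaryPoly p q) (n : ℕ) : |Q.coeff n| ≤ 2 := by
  have hq := hp.trans hpq
  have htwo := expand_two_binaryPoly hpo hqo hcop
  rw [coeff_eq_twistedSum hp hq hcop hr hQ]
  rcases hmod with h | h
  · rw [twistedSum_congr _ h rfl]
    exact abs_twistedSum_two_le_two hpo hqo hp hpq hcop _ _
  · rw [twistedSum_congr _ h rfl, ← Nat.cast_two (R := ℤ),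
      twistedSum_neg hp hq hcop two_ne_zero htwo, abs_neg]
    exact abs_twistedSum_two_le_two hpo hqo hp hpq hcop _ _

theorem HeightWitness.exists_abs_coeff_eq_two {M h : ℕ} (hw : HeightWitness p q M h)
    (hpo : Odd p) (hqo : Odd q) (hpq : p < q) (hcop : p.Coprime q) (hpr : p < r)
    (hmod : (r : ℤ) ≡ 2 [ZMOD ((p * q : ℕ) : ℤ)] ∨ (r : ℤ) ≡ -2 [ZMOD ((p * q : ℕ) : ℤ)])
    (hQ : expand ℤ r (binaryPoly p q) = Q * binaryPoly p q) : ∃ n, |Q.coeff n| = 2 := by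
  have hpos := hw.pos
  have hlt := hw.two_mul_lt
  have hp : 1 < p := by omega
  have hq := hp.trans hpq
  have htwo := hw.twistedSum_eq_two hpo hqo hpq hcop
  rcases hmod with hr | hr
  · refine ⟨r * M + 2 * h, ?_⟩
    rw [coeff_mul_add_eq_twistedSum hp hq hcop hr hQ (by omega)]
    push_cast [mul_add] at htwo ⊢
    rw [htwo, abs_two]
  · have hdeg : 2 * (M + h) ≤ (binaryPoly p q).natDegree := le_natDegree_of_ne_zero <| by
      rw [hw.coeff_eq_one (by omega) hcop]
      exact one_ne_zero
    obtain ⟨l, hl⟩ := Nat.exists_eq_add_of_le (show M + 1 ≤ (binaryPoly p q).natDegree by omega)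
    obtain ⟨t, rfl⟩ := Nat.exists_eq_add_of_lt hpos
    refine ⟨r * l + 2 * t, ?_⟩
    rw [coeff_mul_add_eq_twistedSum hp hq hcop hr hQ (by omega), ← Nat.cast_two (R := ℤ),
      twistedSum_neg hp hq hcop two_ne_zero (expand_two_binaryPoly hpo hqo hcop), abs_neg, hl]
    have hL : M + 1 + l + 1 - (l + 1) = M + 1 := by omega
    have hN : -((2 : ℕ) : ℤ) * l + (2 * t : ℕ) + (2 : ℕ) * (M + 1 + l : ℕ) =
        (2 * (M + (0 + t + 1)) : ℕ) := by
      push_cast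
      ring
    rw [hL, hN, Nat.cast_two, htwo, abs_two]

/-! ### The height as a sup norm -/

theorem natCast_cyclotomicHeight (m : ℕ) :
    (cyclotomicHeight m : ℝ) = (cyclotomic m ℤ).supNorm := by
  have hnorm (k : ℕ) :
      (((cyclotomic m ℤ).coeff k).natAbs : ℝ) = ‖(cyclotomic m ℤ).coeff k‖ := by
    rw [Nat.cast_natAbs, Int.norm_eq_abs, Int.cast_abs]
  apply le_antisymm
  · refine (Nat.cast_le.2 (Finset.sup_le fun k _ => Nat.le_floor ?_)).trans
      (Nat.floor_le (supNorm_nonneg _))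
    exact (hnorm k).trans_le (le_supNorm _ k)
  · obtain ⟨k, hk⟩ := exists_eq_supNorm (cyclotomic m ℤ)
    rw [hk, ← hnorm, Nat.cast_le]
    by_cases h0 : (cyclotomic m ℤ).coeff k = 0
    · simp [h0]
    · exact Finset.le_sup (f := fun k => ((cyclotomic m ℤ).coeff k).natAbs) (mem_support_iff.2 h0)

theorem supNorm_eq_natCast {Q : ℤ[X]} {c : ℕ} (hle : ∀ n, |Q.coeff n| ≤ c)
    (hex : ∃ n, |Q.coeff n| = c) : Q.supNorm = c := by
  refine (isGreatest_supNorm Q).unique ⟨hex.imp fun n hn => ?_, ?_⟩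
  · simp [Int.norm_eq_abs, ← Int.cast_abs, hn]
  · rintro _ ⟨n, rfl⟩
    simpa [Int.norm_eq_abs] using (Int.cast_le (R := ℝ)).2 (hle n)

theorem cyclotomic_pqr_height_eq_two_general (hpo : Odd p) (hqo : Odd q) (hpq : p < q)
    (hcop : p.Coprime q) (hpr : p < r)
    (hmod : (r : ℤ) ≡ 2 [ZMOD ((p * q : ℕ) : ℤ)] ∨ (r : ℤ) ≡ -2 [ZMOD ((p * q : ℕ) : ℤ)])
    (hq1 : ¬ q ≡ 1 [MOD p]) (hQ : IsTernaryPoly p q r Q) : Q.supNorm = 2 := by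
  have hp : 1 < p := lt_of_le_of_ne hpo.pos fun h => hq1 (h ▸ Nat.modEq_one)
  have hexp : expand ℤ r (binaryPoly p q) = Q * binaryPoly p q :=
    hQ.expand_binaryPoly (by omega) (by omega) (by omega) hcop
  obtain ⟨M, h, hw⟩ := exists_heightWitness hpo hqo hp hpq hcop hq1
  exact_mod_cast supNorm_eq_natCast (c := 2)
    (abs_coeff_le_two hpo hqo hp hpq hcop (by omega) hmod hexp)
    (hw.exists_abs_coeff_eq_two hpo hqo hpq hcop hpr hmod hexp)

end

end

theorem cyclotomic_pqr_height_eq_two (p q r : ℕ)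
    (hp : p.Prime) (hq : q.Prime) (hr : r.Prime)
    (hpo : Odd p) (hqo : Odd q) (hro : Odd r)
    (hpq : p < q) (hqr : q < r)
    (hmod : (r : ℤ) ≡ 2 [ZMOD ((p * q : ℕ) : ℤ)] ∨
      (r : ℤ) ≡ -2 [ZMOD ((p * q : ℕ) : ℤ)])
    (hq1 : ¬ q ≡ 1 [MOD p]) :
    cyclotomicHeight (p * q * r) = 2 := by
  have hpr := hpq.trans hqr
  exact_mod_cast (natCast_cyclotomicHeight _).trans <|
    cyclotomic_pqr_height_eq_two_general hpo hqo hpq ((Nat.coprime_primes hp hq).2 hpq.ne) hpr hmod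
      hq1 (isTernaryPoly_cyclotomic hp hq hr hpq.ne hpr.ne hqr.ne)
end
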